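/- arXiv:1608.01463 — 4 statements merged into one kernel-verified Lean document; each statement's English description precedes it below -/
import Mathlib

section
/- Let G=(V,E) be a multigraph without self-loops and let s ∈ V. Then the minimum size of an s-cycle cover of G equals the maximum size of an s-cycle packing of G; moreover, both optima are attained by half-integral solutions, i.e., there exist an s-cycle cover x with values in {0,1/2,1} and an s-cycle packing y with values in {0,1/2,1} such that Σ_{v∈V} x(v) = Σ_{C∈𝒞_s} y(C), x has minimum size among all s-cycle covers, and y has maximum size among all s-cycle packings. -/
/-- A multigraph on vertex type `V` with edge type `E`: each edge has an
unordered pair of endpoints.  Parallel edges are distinguished (they are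
different elements of `E`), and self-loops are edges whose endpoint pair is
diagonal. -/
structure Multigraph (V : Type) (E : Type) where
  ends : E → Sym2 V

namespace Multigraph

variable {V E : Type}

/-- A multigraph has no self-loops. -/
def LoopFree (G : Multigraph V E) : Prop := ∀ e : E, ¬ (G.ends e).IsDiag

/-- The degree of a vertex: the number of incident edges (parallel edges
counted with multiplicity). -/
noncomputable def degree (G : Multigraph V E) (v : V) : ℕ :=
  Nat.card {e : E // v ∈ G.ends e}

/-- A walk `(v₀, e₁, v₁, …, e_l, v_l)` of positive length `l ≥ 1` in which
each edge `eᵢ` joins `v_{i-1}` and `vᵢ`. -/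
structure Walk (G : Multigraph V E) where
  len : ℕ
  len_pos : 0 < len
  verts : Fin (len + 1) → V
  edges : Fin len → E
  valid : ∀ i : Fin len, G.ends (edges i) = s(verts i.castSucc, verts i.succ)

namespace Walk

variable {G : Multigraph V E}

/-- The first vertex of a walk. -/
def start (W : G.Walk) : V := W.verts 0

/-- The last vertex of a walk. -/
def finish (W : G.Walk) : V := W.verts (Fin.last W.len)

/-- A cycle: a closed walk of positive length with pairwise distinct edges and
pairwise distinct vertices (except that the first and last vertex coincide). -/
def IsCycle (W : G.Walk) : Prop :=
  W.start = W.finish ∧ Function.Injective W.edges ∧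
    Function.Injective fun i : Fin W.len => W.verts i.castSucc

/-- An `s`-cycle: a walk with `v₀ = v_l = s`, with `vᵢ ≠ s` for `0 < i < l`,
with no U-turns (`eᵢ ≠ e_{i+1}`), and in which every edge occurs at most
twice. -/
def IsSCycle (W : G.Walk) (s : V) : Prop :=
  W.start = s ∧ W.finish = s ∧
  (∀ i : Fin (W.len + 1), i ≠ 0 → i ≠ Fin.last W.len → W.verts i ≠ s) ∧
  (∀ i j : Fin W.len, (i : ℕ) + 1 = (j : ℕ) → W.edges i ≠ W.edges j) ∧
  (∀ e : E, Nat.card {i : Fin W.len // W.edges i = e} ≤ 2)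

/-- The multiplicity of a vertex `v` in the multiset `V(W)` of vertices of a
walk `W`. -/
noncomputable def vertCount (W : G.Walk) (v : V) : ℕ :=
  Nat.card {i : Fin (W.len + 1) // W.verts i = v}

end Walk

/-- `S` is a feedback vertex set: every cycle of `G` meets `S`
(equivalently, `G − S` contains no cycle). -/
def IsFVS (G : Multigraph V E) (S : Set V) : Prop :=
  ∀ W : G.Walk, W.IsCycle → ∃ i, W.verts i ∈ S

/-- The minimum size of a feedback vertex set. -/
noncomputable def fvs [Fintype V] (G : Multigraph V E) : ℕ :=
  sInf {n : ℕ | ∃ S : Set V, G.IsFVS S ∧ S.ncard = n}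

/-- `x : V → ℝ≥0` is an `s`-cycle cover: `x s = 0` and every `s`-cycle `C`
satisfies `x(V(C)) ≥ 1` (vertices counted with multiplicity). -/
def IsSCycleCover (G : Multigraph V E) (s : V) (x : V → ℝ) : Prop :=
  (∀ v, 0 ≤ x v) ∧ x s = 0 ∧
    ∀ W : G.Walk, W.IsSCycle s → 1 ≤ ∑ i, x (W.verts i)

/-- A function is half-integral if it takes values in `{0, 1/2, 1}`. -/
def HalfIntegral (x : V → ℝ) : Prop := ∀ v, x v = 0 ∨ x v = 1/2 ∨ x v = 1

/-- A minimum `s`-cycle cover. -/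
def IsMinSCycleCover [Fintype V] (G : Multigraph V E) (s : V) (x : V → ℝ) : Prop :=
  G.IsSCycleCover s x ∧ ∀ x' : V → ℝ, G.IsSCycleCover s x' → ∑ v, x v ≤ ∑ v, x' v

/-- An `s`-cycle packing: a nonnegative, finitely supported weighting of the
`s`-cycles such that every vertex `v ≠ s` is used (with multiplicity) with
total weight at most `1`. -/
def IsSCyclePacking (G : Multigraph V E) (s : V) (y : G.Walk →₀ ℝ) : Prop :=
  (∀ W, 0 ≤ y W) ∧ (∀ W, y W ≠ 0 → W.IsSCycle s) ∧
    ∀ v : V, v ≠ s → ∑ W ∈ y.support, (W.vertCount v : ℝ) * y W ≤ 1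

/-- The size of an `s`-cycle packing. -/
noncomputable def packingSize {G : Multigraph V E} (y : G.Walk →₀ ℝ) : ℝ :=
  ∑ W ∈ y.support, y W

/-- Number of edges incident to `v` with `f`-value 1. -/
noncomputable def cnt1 (G : Multigraph V E) (f : E → ℝ) (v : V) : ℕ :=
  Nat.card {e : E // v ∈ G.ends e ∧ f e = 1}

/-- Number of edges incident to `v` with `f`-value 1/2. -/
noncomputable def cntH (G : Multigraph V E) (f : E → ℝ) (v : V) : ℕ :=
  Nat.card {e : E // v ∈ G.ends e ∧ f e = 1/2}

/-- type-O: all incident edges have `f`-value 0. -/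
def IsTypeO (G : Multigraph V E) (f : E → ℝ) (v : V) : Prop :=
  ∀ e : E, v ∈ G.ends e → f e = 0

/-- type-I: exactly two incident edges have value 1 and none has value 1/2. -/
def IsTypeI (G : Multigraph V E) (f : E → ℝ) (v : V) : Prop :=
  G.cnt1 f v = 2 ∧ G.cntH f v = 0

/-- type-H: no incident edge has value 1 and exactly two have value 1/2. -/
def IsTypeH (G : Multigraph V E) (f : E → ℝ) (v : V) : Prop :=
  G.cnt1 f v = 0 ∧ G.cntH f v = 2

/-- type-T: exactly one incident edge has value 1 and exactly two have value 1/2. -/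
def IsTypeT (G : Multigraph V E) (f : E → ℝ) (v : V) : Prop :=
  G.cnt1 f v = 1 ∧ G.cntH f v = 2

/-- A basic `s`-cycle packing: `f : E → {0,1/2,1}` with `f(e) ∈ {0,1}` on edges
incident to `s`, every vertex `v ≠ s` of one of the four types O, I, H, T, and
every cycle consisting of edges of value 1/2 (i.e. every half-integral cycle)
containing an odd number of type-T vertices. -/
def IsBasicSCyclePacking (G : Multigraph V E) (s : V) (f : E → ℝ) : Prop :=
  (∀ e : E, f e = 0 ∨ f e = 1/2 ∨ f e = 1) ∧
  (∀ e : E, s ∈ G.ends e → f e = 0 ∨ f e = 1) ∧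
  (∀ v : V, v ≠ s →
    G.IsTypeO f v ∨ G.IsTypeI f v ∨ G.IsTypeH f v ∨ G.IsTypeT f v) ∧
  (∀ W : G.Walk, W.IsCycle → (∀ j, f (W.edges j) = 1/2) →
    Odd (Nat.card {i : Fin W.len // G.IsTypeT f (W.verts i.castSucc)}))

/-- The size of a basic `s`-cycle packing: `(1/2) · Σ_{e ∈ δ(s)} f(e)`. -/
noncomputable def basicSize [Fintype E] (G : Multigraph V E) (s : V) (f : E → ℝ) : ℝ :=
  (1/2) * ∑ e : E, Set.indicator {e' : E | s ∈ G.ends e'} f e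

/-- `u` and `v` are connected by a walk avoiding the vertex set `S` and the
edge set `F` (or `u = v`). -/
def Reach (G : Multigraph V E) (S : Set V) (F : Set E) (u v : V) : Prop :=
  u = v ∨ ∃ W : G.Walk, (∀ i, W.verts i ∉ S) ∧ (∀ j, W.edges j ∉ F) ∧
    W.start = u ∧ W.finish = v

/-- The edge `e` belongs to the set `B` of the `s`-cycle cover reduction with
respect to the set `X`: `e` joins `s` to some `u ∉ X`, `e` is a bridge of
`G − X` (its endpoints are disconnected in `G − X − e`), and the connected
component of `u` in `G − X − s` is a tree (no cycle of `G − X − s` passes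
through a vertex reachable from `u` in `G − X − s`). -/
def InB (G : Multigraph V E) (s : V) (X : Set V) (e : E) : Prop :=
  ∃ u : V, G.ends e = s(s, u) ∧ u ≠ s ∧ u ∉ X ∧ s ∉ X ∧
    ¬ G.Reach X {e} s u ∧
    ¬ ∃ W : G.Walk, W.IsCycle ∧ (∀ i, W.verts i ∉ X ∪ {s}) ∧
        G.Reach (X ∪ {s}) ∅ u W.start

/-- The graph `G' = (V, E')` obtained from `G` by the `s`-cycle cover
reduction with respect to a half-integral `s`-cycle cover `x`: with
`X = x⁻¹(1)`, insert a double edge (two new parallel edges) between `s` and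
each `v ∈ X`, and delete the edges of `B`. -/
def reduced (G : Multigraph V E) (s : V) (x : V → ℝ) :
    Multigraph V ({e : E // ¬ G.InB s {v : V | x v = 1} e} ⊕ ({v : V // x v = 1} × Bool)) where
  ends := fun e =>
    match e with
    | .inl e' => G.ends e'.val
    | .inr p => s(s, p.1.val)

/-- The graph `G − s` obtained by deleting the vertex `s` and all incident
edges (the vertex `s` is kept as an isolated vertex). -/
def deleteVertex (G : Multigraph V E) (s : V) :
    Multigraph V {e : E // s ∉ G.ends e} where
  ends := fun e => G.ends e.val

/-- An `f`-augmenting walk for a basic `s`-cycle packing `f`: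
(1) it starts at `s`; (2) its first edge has value 0; (3) its edges are
pairwise distinct; (4) its vertices `v₀,…,v_{l-1}` are pairwise distinct;
(5) each interior vertex `vᵢ` (`1 ≤ i ≤ l-1`) is type-O, or type-I with
`f(e) = 1` for at least one of `e ∈ {eᵢ, e_{i+1}}`; (6) if the last vertex
`v_l` equals `vᵢ` for some `i < l` then: `v_l = s` and `f(e_l) = 0`, or `v_l`
is type-O, or `v_l` is type-I and `f(e) = 1` for at least one of
`e ∈ {eᵢ, e_l}`; (7) if `v_l` is a new vertex then it is type-H or type-T. -/
def IsAugmentingWalk (G : Multigraph V E) (s : V) (f : E → ℝ) (W : G.Walk) : Prop :=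
  W.start = s ∧
  f (W.edges ⟨0, W.len_pos⟩) = 0 ∧
  Function.Injective W.edges ∧
  Function.Injective (fun i : Fin W.len => W.verts i.castSucc) ∧
  (∀ i : Fin W.len, 0 < i.val →
    (G.IsTypeO f (W.verts i.castSucc) ∨
      (G.IsTypeI f (W.verts i.castSucc) ∧
        (f (W.edges ⟨i.val - 1, Nat.lt_of_le_of_lt (Nat.sub_le _ _) i.isLt⟩) = 1 ∨
          f (W.edges i) = 1)))) ∧
  (∀ i : Fin W.len, W.finish = W.verts i.castSucc →
    ((W.finish = s ∧ f (W.edges ⟨W.len - 1, Nat.sub_lt W.len_pos Nat.one_pos⟩) = 0) ∨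
     (W.finish ≠ s ∧ G.IsTypeO f W.finish) ∨
     (W.finish ≠ s ∧ G.IsTypeI f W.finish ∧
       (f (W.edges ⟨i.val - 1, Nat.lt_of_le_of_lt (Nat.sub_le _ _) i.isLt⟩) = 1 ∨
         f (W.edges ⟨W.len - 1, Nat.sub_lt W.len_pos Nat.one_pos⟩) = 1)))) ∧
  ((∀ i : Fin W.len, W.finish ≠ W.verts i.castSucc) →
    (G.IsTypeH f W.finish ∨ G.IsTypeT f W.finish))

/-- `g = f_W` is obtained from `f` by augmenting along the walk `W`.
If `v_l = s` (so `h = l`), the values of `f` on `e₁,…,e_l` are flipped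
(`f ↦ 1 − f`).  If `v_l ≠ s` equals an earlier vertex `vᵢ` (so `h = i`), the
values on `e₁,…,e_h` are flipped and the values on `e_{h+1},…,e_l` are set to
`1/2`.  If `v_l ≠ s` is a new vertex (type-H or type-T, with `h = l`), the
values on `e₁,…,e_l` are flipped and, on the half-integral cycle `C` of `v_l`
(traversed from `t₀ = v_l` in either direction), the edges of the segment
`Pᵢ` between consecutive markers `tᵢ, t_{i+1}` (the markers being `v_l`
together with the type-T vertices of `C`) receive value `0` for even `i` and
`1` for odd `i`; the segment index of an edge is the number of type-T
vertices strictly preceding it along the traversal.  All other edges keep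
their `f`-value. -/
def AugmentedAlong (G : Multigraph V E) (s : V) (f : E → ℝ) (W : G.Walk) (g : E → ℝ) : Prop :=
  -- Case A : the walk returns to `s`.
  (W.finish = s ∧
    (∀ j : Fin W.len, g (W.edges j) = 1 - f (W.edges j)) ∧
    (∀ e : E, (∀ j, e ≠ W.edges j) → g e = f e)) ∨
  -- Case B : the last vertex is a repeated vertex `vᵢ ≠ s` (type-O or type-I).
  (W.finish ≠ s ∧
    (∃ i : Fin W.len, W.finish = W.verts i.castSucc ∧
      (∀ j : Fin W.len, j.val < i.val → g (W.edges j) = 1 - f (W.edges j)) ∧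
      (∀ j : Fin W.len, i.val ≤ j.val → g (W.edges j) = 1/2) ∧
      (∀ e : E, (∀ j, e ≠ W.edges j) → g e = f e))) ∨
  -- Case C : the last vertex is a new vertex of type-H or type-T.
  (W.finish ≠ s ∧ (∀ i : Fin W.len, W.finish ≠ W.verts i.castSucc) ∧
    (∃ C : G.Walk, C.IsCycle ∧ C.verts 0 = W.finish ∧
      (∀ j, f (C.edges j) = 1/2) ∧
      (∀ j : Fin W.len, g (W.edges j) = 1 - f (W.edges j)) ∧
      (∀ j : Fin C.len,
        g (C.edges j) =
          if Even (Nat.card {m : Fin C.len //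
              1 ≤ m.val ∧ m.val ≤ j.val ∧ G.IsTypeT f (C.verts m.castSucc)})
          then 0 else 1) ∧
      (∀ e : E, (∀ j, e ≠ W.edges j) → (∀ j, e ≠ C.edges j) → g e = f e)))


end Multigraph

/-- Limit helper: an affine function that is `≤ c` for all small positive `ε`. -/
lemma le_of_forall_eps (a b c : ℝ) (h : ∀ ε : ℝ, 0 < ε → a + ε * b ≤ c) : a ≤ c := by
  by_contra hc
  push Not at hc
  have hb : 0 < |b| + 1 := by positivity
  have := h ((a - c) / (2 * (|b| + 1))) (by apply div_pos <;> linarith)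
  have h2 : (a - c) / (2 * (|b| + 1)) * (|b| + 1) = (a - c) / 2 := by field_simp
  have h3 : (a - c) / (2 * (|b| + 1)) * b ≥ - ((a - c) / (2 * (|b| + 1)) * (|b| + 1)) := by
    have : 0 < (a - c) / (2 * (|b| + 1)) := by apply div_pos <;> linarith
    nlinarith [neg_abs_le b]
  linarith

/-- Coefficient helper: bounded above along a ray. -/
lemma nonpos_of_forall_ray (a b c : ℝ) (h : ∀ r : ℝ, 0 < r → a + r * b ≤ c) : b ≤ 0 := by
  by_contra hb
  push Not at hb
  have := h ((|c - a| + 1) / b) (by positivity)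
  have h2 : (|c - a| + 1) / b * b = |c - a| + 1 := by field_simp
  have := le_abs_self (c - a)
  linarith

/-- Strong duality for a fractional packing / covering pair. -/
lemma packing_covering_duality {I J : Type*} [Fintype I] [Fintype J] (A : I → J → ℝ)
    (hA : ∀ i j, 0 ≤ A i j) (hpos : ∀ j, ∃ i, 1 ≤ A i j) :
    ∃ (x : I → ℝ) (y : J → ℝ), (∀ i, 0 ≤ x i) ∧ (∀ j, 0 ≤ y j) ∧
      (∀ j, 1 ≤ ∑ i, x i * A i j) ∧ (∀ i, ∑ j, A i j * y j ≤ 1) ∧ ∑ i, x i = ∑ j, y j := by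
  classical
  -- the primal polytope is compact
  let K : Set (J → ℝ) := {y | (∀ j, 0 ≤ y j) ∧ ∀ i, ∑ j, A i j * y j ≤ 1}
  have hKc : IsClosed K := by
    have h1 : IsClosed {y : J → ℝ | ∀ j, 0 ≤ y j} := by
      simp only [Set.ofPred_forall]
      exact isClosed_iInter fun j => isClosed_le continuous_const (continuous_apply j)
    have h2 : IsClosed {y : J → ℝ | ∀ i, ∑ j, A i j * y j ≤ 1} := by
      simp only [Set.ofPred_forall]
      exact isClosed_iInter fun i => isClosed_le (by fun_prop) continuous_const
    exact h1.inter h2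
  have hKsub : K ⊆ Set.Icc (fun _ => 0) (fun _ => 1) := by
    rintro y ⟨h0, h1⟩
    refine ⟨h0, fun j => ?_⟩
    obtain ⟨i, hi⟩ := hpos j
    have : A i j * y j ≤ ∑ j, A i j * y j :=
      Finset.single_le_sum (f := fun j => A i j * y j)
        (fun j _ => mul_nonneg (hA i j) (h0 j)) (Finset.mem_univ j)
    have h2 := h1 i
    have h3 := h0 j
    show y j ≤ 1
    nlinarith
  have hKcomp : IsCompact K := isCompact_Icc.of_isClosed_subset hKc hKsub
  have hKne : K.Nonempty := ⟨fun _ => 0, by simp [K]⟩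
  obtain ⟨y, hyK, hmax⟩ := hKcomp.exists_isMaxOn hKne
    (f := fun y : J → ℝ => ∑ j, y j) (by fun_prop)
  have hmax' : ∀ z ∈ K, ∑ j, z j ≤ ∑ j, y j := fun z hz => hmax hz
  set τ := ∑ j, y j with hτ
  -- the open convex set
  let C : Set ((I → ℝ) × ℝ) := {p | ∃ z : J → ℝ, (∀ j, 0 ≤ z j) ∧
    (∀ i, ∑ j, A i j * z j < p.1 i) ∧ p.2 < ∑ j, z j}
  have hCo : IsOpen C := by
    have : C = ⋃ z : {z : J → ℝ // ∀ j, 0 ≤ z j}, ({p : (I → ℝ) × ℝ |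
        ∀ i, ∑ j, A i j * z.1 j < p.1 i} ∩ {p | p.2 < ∑ j, z.1 j}) := by
      ext p
      simp only [C, Set.mem_iUnion, Subtype.exists, Set.mem_inter_iff]
      constructor
      · rintro ⟨z, h0, h1, h2⟩; exact ⟨z, h0, h1, h2⟩
      · rintro ⟨z, h0, h1, h2⟩; exact ⟨z, h0, h1, h2⟩
    rw [this]
    refine isOpen_iUnion fun z => IsOpen.inter ?_ ?_
    · simp only [Set.ofPred_forall]
      exact isOpen_iInter_of_finite fun i => isOpen_lt continuous_const (by fun_prop)
    · exact isOpen_lt continuous_snd continuous_const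
  have hCconv : Convex ℝ C := by
    rintro p ⟨z, hz0, hz1, hz2⟩ q ⟨w, hw0, hw1, hw2⟩ a b ha hb hab
    refine ⟨fun j => a * z j + b * w j, fun j => ?_, fun i => ?_, ?_⟩
    · have := hz0 j; have := hw0 j; positivity
    · have e : ∑ j, A i j * (a * z j + b * w j)
          = a * ∑ j, A i j * z j + b * ∑ j, A i j * w j := by
        rw [Finset.mul_sum, Finset.mul_sum, ← Finset.sum_add_distrib]
        exact Finset.sum_congr rfl fun j _ => by ring
      rw [e]
      simp only [Prod.fst_add, Prod.smul_fst, Pi.add_apply, Pi.smul_apply, smul_eq_mul]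
      have h1 := hz1 i; have h2 := hw1 i
      rcases ha.eq_or_lt with h | h
      · have : b = 1 := by linarith
        subst this; subst h; linarith
      · nlinarith
    · rw [Finset.sum_add_distrib, ← Finset.mul_sum, ← Finset.mul_sum]
      simp only [Prod.snd_add, Prod.smul_snd, smul_eq_mul]
      rcases ha.eq_or_lt with h | h
      · have : b = 1 := by linarith
        subst this; subst h; linarith
      · nlinarith
  have hnot : ((fun _ => 1, τ) : (I → ℝ) × ℝ) ∉ C := by
    rintro ⟨z, hz0, hz1, hz2⟩
    have := hmax' z ⟨hz0, fun i => (hz1 i).le⟩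
    exact absurd hz2 (not_lt.mpr this)
  obtain ⟨F, hF⟩ := geometric_hahn_banach_open_point hCconv hCo hnot
  let g : I → ℝ := fun i => F (Pi.single i 1, 0)
  let G : ℝ := F (0, 1)
  have hFe : ∀ (b : I → ℝ) (t : ℝ), F (b, t) = ∑ i, b i * g i + t * G := by
    intro b t
    have : ((b, t) : (I → ℝ) × ℝ) = ∑ i, b i • ((Pi.single i 1, 0) : (I → ℝ) × ℝ) + t • (0, 1) := by
      ext k
      · simp [Finset.sum_apply, Pi.single_apply, Prod.fst_sum]
      · simp [Prod.snd_sum]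
    rw [this, map_add, map_sum, map_smul]
    simp only [map_smul, smul_eq_mul, g, G]
  set c := F (fun _ => 1, τ) with hc
  have hce : c = ∑ i, g i + τ * G := by rw [hc, hFe]; simp
  -- members of C
  have hmem : ∀ (z : J → ℝ), (∀ j, 0 ≤ z j) → ∀ (u : I → ℝ) (t : ℝ), (∀ i, 0 < u i) → 0 < t →
      ∑ i, (∑ j, A i j * z j) * g i + ∑ i, u i * g i + (∑ j, z j) * G - t * G < c := by
    intro z hz u t hu ht
    have := hF (fun i => ∑ j, A i j * z j + u i, ∑ j, z j - t)
      ⟨z, hz, fun i => by have := hu i; simp; linarith, by simp; linarith⟩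
    rw [hFe] at this
    have e : ∑ i, (∑ j, A i j * z j + u i) * g i
        = ∑ i, (∑ j, A i j * z j) * g i + ∑ i, u i * g i := by
      rw [← Finset.sum_add_distrib]; exact Finset.sum_congr rfl fun i _ => by ring
    rw [e] at this
    linarith
  have hg : ∀ i, g i ≤ 0 := by
    intro i
    apply nonpos_of_forall_ray (∑ i, g i - G) (g i) c
    intro r hr
    have := hmem (fun _ => 0) (by simp) (fun k => 1 + if k = i then r else 0) 1
      (fun k => by by_cases hk : k = i <;> simp [hk] <;> linarith) one_pos
    simp [add_mul, Finset.sum_add_distrib] at this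
    linarith
  have hG : 0 ≤ G := by
    have : -G ≤ 0 := by
      apply nonpos_of_forall_ray (∑ i, g i) (-G) c
      intro r hr
      have := hmem (fun _ => 0) (by simp) (fun k => 1) r (by simp) hr
      simp at this
      linarith
    linarith
  -- scaled inequality with `z`
  have hz : ∀ z : J → ℝ, (∀ j, 0 ≤ z j) →
      ∑ i, (∑ j, A i j * z j) * g i + (∑ j, z j) * G ≤ 0 := by
    intro z hz
    apply nonpos_of_forall_ray (∑ i, g i - G) _ c
    intro r hr
    have := hmem (fun j => r * z j) (fun j => mul_nonneg hr.le (hz j)) (fun k => 1) 1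
      (by simp) one_pos
    have e1 : ∑ i, (∑ j, A i j * (r * z j)) * g i = r * ∑ i, (∑ j, A i j * z j) * g i := by
      rw [Finset.mul_sum]
      refine Finset.sum_congr rfl fun i _ => ?_
      have : ∑ j, A i j * (r * z j) = r * ∑ j, A i j * z j := by
        rw [Finset.mul_sum]; exact Finset.sum_congr rfl fun j _ => by ring
      rw [this]; ring
    have e2 : ∑ j, r * z j = r * ∑ j, z j := by rw [Finset.mul_sum]
    rw [e1, e2] at this
    simp at this
    linarith
  have hc0 : 0 ≤ c := by
    apply le_of_forall_eps 0 (∑ i, g i - G) c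
    intro ε hε
    have := hmem (fun _ => 0) (by simp) (fun k => ε) ε (fun _ => hε) hε
    simp [← Finset.mul_sum] at this
    linarith
  have hcle : c ≤ 0 := by
    have h1 := hz y hyK.1
    have h2 : ∑ i, g i ≤ ∑ i, (∑ j, A i j * y j) * g i := by
      refine Finset.sum_le_sum fun i _ => ?_
      have := hyK.2 i; have := hg i; nlinarith
    rw [hce]; linarith
  have hceq : c = 0 := le_antisymm hcle hc0
  have hGpos : 0 < G := by
    rcases hG.eq_or_lt with h | h
    · exfalso
      have hs : ∑ i, g i = 0 := by rw [← h] at hce; linarith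
      have := hmem (fun _ => 0) (by simp) (fun k => 1) 1 (by simp) one_pos
      simp [hs, ← h, hceq] at this
    · exact h
  refine ⟨fun i => - g i / G, y, fun i => div_nonneg (by linarith [hg i]) hG, hyK.1, fun j => ?_,
    hyK.2, ?_⟩
  · have := hz (Pi.single j 1) (fun k => by by_cases h : k = j <;> simp [Pi.single_apply, h])
    simp [Pi.single_apply] at this
    have e : ∑ i, -g i / G * A i j = (- ∑ i, A i j * g i) / G := by
      rw [← Finset.sum_neg_distrib, Finset.sum_div]
      exact Finset.sum_congr rfl fun i _ => by ring
    rw [e, le_div_iff₀ hGpos]; linarith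
  · have e : ∑ i, -g i / G = (- ∑ i, g i) / G := by
      rw [← Finset.sum_neg_distrib, Finset.sum_div]
    rw [e, div_eq_iff hGpos.ne']; linarith

namespace Multigraph

variable {V E : Type}

/-- A directed traversal of an edge. -/
structure Drt (V E : Type) where
  src : V
  e : E
  dst : V

/-- The reversed traversal. -/
def Drt.flip (d : Drt V E) : Drt V E := ⟨d.dst, d.e, d.src⟩

/-- A list of darts forming a (possibly empty) walk from `a` to `b`. -/
def WalkL (G : Multigraph V E) : V → List (Drt V E) → V → Prop
  | a, [], b => a = b
  | a, d :: l, b => d.src = a ∧ G.ends d.e = s(d.src, d.dst) ∧ WalkL G d.dst l b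

/-- No U-turns. -/
def NoU (l : List (Drt V E)) : Prop := l.IsChain (fun d d' => d.e ≠ d'.e)

lemma walkL_append (G : Multigraph V E) (a b : V) (l₁ l₂ : List (Drt V E)) :
    G.WalkL a (l₁ ++ l₂) b ↔ ∃ c, G.WalkL a l₁ c ∧ G.WalkL c l₂ b := by
  induction l₁ generalizing a with
  | nil => simp [WalkL]
  | cons d l ih => simp [WalkL, ih]; tauto

lemma walkL_flip (G : Multigraph V E) (a b : V) (l : List (Drt V E)) (h : G.WalkL a l b) :
    G.WalkL b (l.reverse.map Drt.flip) a := by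
  induction l generalizing a with
  | nil => simpa [WalkL] using h.symm
  | cons d l ih =>
    obtain ⟨h1, h2, h3⟩ := h
    simp only [List.reverse_cons, List.map_append, List.map_cons, List.map_nil]
    rw [walkL_append]
    refine ⟨d.dst, ih _ h3, rfl, ?_, h1⟩
    simp [Drt.flip, h2, Sym2.eq_swap]

lemma noU_flip (l : List (Drt V E)) (h : NoU l) : NoU (l.reverse.map Drt.flip) := by
  unfold NoU at *
  rw [List.isChain_map, List.isChain_reverse]
  exact h.imp fun a b hab => by simpa [Drt.flip, ne_comm] using hab

lemma noU_append (l₁ l₂ : List (Drt V E)) : NoU (l₁ ++ l₂) ↔ NoU l₁ ∧ NoU l₂ ∧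
    ∀ x ∈ l₁.getLast?, ∀ y ∈ l₂.head?, x.e ≠ y.e := List.isChain_append

/-- Weight of a dart list. -/
def wt (x : V → ℝ) (l : List (Drt V E)) : ℝ := (l.map fun d => x d.dst).sum

lemma wt_append (x : V → ℝ) (l₁ l₂ : List (Drt V E)) : wt x (l₁ ++ l₂) = wt x l₁ + wt x l₂ := by
  simp [wt]

lemma wt_cons (x : V → ℝ) (d : Drt V E) (l : List (Drt V E)) :
    wt x (d :: l) = x d.dst + wt x l := by
  simp [wt]

lemma wt_nonneg (x : V → ℝ) (hx : ∀ v, 0 ≤ x v) (l : List (Drt V E)) : 0 ≤ wt x l := by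
  apply List.sum_nonneg
  simp only [List.mem_map]
  rintro _ ⟨d, _, rfl⟩
  exact hx _

lemma walkL_getElem (G : Multigraph V E) (a b : V) (l : List (Drt V E)) (h : G.WalkL a l b) :
    (∀ i (hi : i < l.length), G.ends l[i].e = s(l[i].src, l[i].dst)) ∧
    (∀ i (hi : i + 1 < l.length), l[i].dst = l[i+1].src) ∧
    (∀ hi : 0 < l.length, l[0].src = a) ∧
    (∀ hi : 0 < l.length, l[l.length - 1].dst = b) := by
  induction l generalizing a with
  | nil => simp
  | cons d l ih =>
    obtain ⟨h1, h2, h3⟩ := h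
    obtain ⟨i1, i2, i3, i4⟩ := ih _ h3
    refine ⟨?_, ?_, ?_, ?_⟩
    · intro i hi
      cases i with
      | zero => simpa using h2
      | succ i => simpa using i1 i (by simpa using hi)
    · intro i hi
      cases i with
      | zero => simpa using (i3 (by simpa using hi)).symm
      | succ i => simpa using i2 i (by simpa using hi)
    · intro _; simpa using h1
    · intro _
      cases l with
      | nil => simpa [WalkL] using h3
      | cons d' l => simpa using i4 (by simp)

/-- Under an `s`-cycle cover, every closed walk at `s` without U-turns has weight at least 1. -/
lemma one_le_wt (G : Multigraph V E) (s : V) (x : V → ℝ) (hx : G.IsSCycleCover s x) (n : ℕ) :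
    ∀ l : List (Drt V E), l.length = n → l ≠ [] → G.WalkL s l s → NoU l → 1 ≤ wt x l := by
  classical
  obtain ⟨hx0, hxs, hcov⟩ := hx
  induction n using Nat.strong_induction_on with
  | _ n ih =>
  intro l hln hne hw hu
  -- internal visits to `s`
  by_cases h_inner : ∃ i, ∃ hi : i + 1 < l.length, l[i].dst = s
  · obtain ⟨i, hi, his⟩ := h_inner
    have hsplit : l = l.take (i+1) ++ l.drop (i+1) := (List.take_append_drop _ _).symm
    have hw' := hw
    rw [hsplit, walkL_append] at hw'
    obtain ⟨c, hc1, hc2⟩ := hw'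
    have hlen : (l.take (i+1)).length = i + 1 := by simp; omega
    have hcs : c = s := by
      have := (walkL_getElem G _ _ _ hc1).2.2.2 (by omega)
      rw [← this, ← his]; simp [hlen]
    rw [hcs] at hc1
    have hu' := hu
    rw [hsplit, noU_append] at hu'
    have := ih (i+1) (by omega) (l.take (i+1)) hlen (by intro h; simp [h] at hlen) hc1 hu'.1
    rw [hsplit, wt_append]
    have := wt_nonneg x hx0 (l.drop (i+1))
    linarith
  push Not at h_inner
  by_cases hnd : l.Nodup
  · obtain ⟨g1, g2, g3, g4⟩ := walkL_getElem G _ _ _ hw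
    have hpos : 0 < l.length := List.length_pos_iff.mpr hne
    let W : G.Walk :=
      { len := l.length
        len_pos := hpos
        verts := Fin.cons s (fun i : Fin l.length => l[i].dst)
        edges := fun i => l[i].e
        valid := by
          intro i
          rw [Fin.cons_succ]
          have h1 : (Fin.cons s (fun i : Fin l.length => l[i].dst) : Fin (l.length + 1) → V)
              i.castSucc = l[i].src := by
            obtain ⟨i, hi⟩ := i
            cases i with
            | zero =>
              have : (Fin.castSucc ⟨0, hi⟩ : Fin (l.length + 1)) = 0 := rfl
              rw [this, Fin.cons_zero]
              exact (g3 hpos).symm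
            | succ i =>
              have : (Fin.castSucc ⟨i+1, hi⟩ : Fin (l.length + 1)) =
                Fin.succ ⟨i, by omega⟩ := rfl
              rw [this, Fin.cons_succ]
              exact g2 i hi
          rw [h1]
          exact g1 i i.2 }
    have hW : W.IsSCycle s := by
      refine ⟨?_, ?_, ?_, ?_, ?_⟩
      · simp [Walk.start, W]
      · have : (Fin.last l.length) = Fin.succ ⟨l.length - 1, by omega⟩ := by
          ext; simp; omega
        show (Fin.cons s (fun i : Fin l.length => l[i].dst) : Fin (l.length + 1) → V)
          (Fin.last l.length) = s
        rw [this, Fin.cons_succ]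
        exact g4 hpos
      · intro i hi0 hil
        obtain ⟨j, rfl⟩ := Fin.exists_succ_eq.mpr hi0
        show (Fin.cons s (fun i : Fin l.length => l[i].dst) : Fin (l.length + 1) → V)
          (Fin.succ j) ≠ s
        rw [Fin.cons_succ]
        apply h_inner j
        have h1 := j.2
        have h2 : (j : ℕ) + 1 ≠ l.length := by
          intro h; apply hil; ext; simpa [W] using h
        have : W.len = l.length := rfl
        omega
      · intro i j hij
        have := List.isChain_iff_getElem.mp hu i (by have h2 : (j:ℕ) < l.length := j.2; omega)
        show l[i].e ≠ l[j].e
        have hj : l[j] = l[(i:ℕ)+1]'(by have h2 : (j:ℕ) < l.length := j.2; omega) := by simp [hij]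
        rw [hj]; exact this
      · intro e
        have key : ∀ i j : Fin l.length, l[i].e = e → l[j].e = e → l[i].src = l[j].src → i = j := by
          intro i j hi hj hs
          have h1 : G.ends l[i].e = s(l[i].src, l[i].dst) := g1 i i.2
          have h2 : G.ends l[j].e = s(l[j].src, l[j].dst) := g1 j j.2
          have h3 : l[i].dst = l[j].dst := by
            have : s(l[i].src, l[i].dst) = s(l[j].src, l[j].dst) := by
              rw [← h1, ← h2, hi, hj]
            rw [hs] at this
            exact Sym2.congr_right.mp this
          have h4 : l[i] = l[j] := by
            cases hli : l[i]; cases hlj : l[j]; simp_all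
          ext
          exact (List.Nodup.getElem_inj_iff hnd).mp h4
        by_cases hex : ∃ i : Fin l.length, l[i].e = e
        · obtain ⟨i₀, hi₀⟩ := hex
          have : Nat.card {i : Fin W.len // W.edges i = e} ≤ Nat.card Bool := by
            apply Nat.card_le_card_of_injective
              (fun i => decide (l[(i.1 : Fin l.length)].src = l[i₀].src))
            rintro ⟨i, hi⟩ ⟨j, hj⟩ hij
            simp only [decide_eq_decide] at hij
            apply Subtype.ext
            show i = j
            apply key i j hi hj
            have aux : ∀ k : Fin l.length, l[k].e = e → l[k].src ≠ l[i₀].src →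
                l[k].src = l[i₀].dst := by
              intro k hk hks
              have h1 : G.ends l[k].e = s(l[k].src, l[k].dst) := g1 k k.2
              have h2 : G.ends l[i₀].e = s(l[i₀].src, l[i₀].dst) := g1 i₀ i₀.2
              have : l[k].src ∈ s(l[i₀].src, l[i₀].dst) := by
                rw [← h2, hi₀, ← hk, h1]
                simp
              rw [Sym2.mem_iff] at this
              tauto
            by_cases hc : l[i].src = l[i₀].src
            · rw [hc, hij.mp hc]
            · have hc' : ¬ l[j].src = l[i₀].src := fun h => hc (hij.mpr h)
              rw [aux i hi hc, aux j hj hc']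
          simpa using this
        · have : IsEmpty {i : Fin W.len // W.edges i = e} := ⟨fun i => hex ⟨i.1, i.2⟩⟩
          simp
    have := hcov W hW
    have hs : ∑ i, x (W.verts i) = wt x l := by
      show ∑ i : Fin (l.length + 1), x ((Fin.cons s (fun i : Fin l.length => l[i].dst) :
        Fin (l.length + 1) → V) i) = wt x l
      rw [Fin.sum_univ_succ]
      simp only [Fin.cons_zero, Fin.cons_succ, hxs, zero_add]
      rw [wt]
      exact Fin.sum_univ_fun_getElem l (fun d => x d.dst)
    rw [← hs]; exact this
  · -- splice out
    rw [← List.exists_duplicate_iff_not_nodup] at hnd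
    obtain ⟨d, hd⟩ := hnd
    rw [List.duplicate_iff_exists_distinct_get] at hd
    obtain ⟨i, j, hij, hi, hj⟩ := hd
    have hi' : l = l.take i ++ d :: l.drop (i+1) := by
      have : d = l[i] := by simpa using hi
      rw [this]; simp
    have hj' : l = l.take j ++ d :: l.drop (j+1) := by
      have : d = l[j] := by simpa using hj
      rw [this]; simp
    have hij' : (i : ℕ) < j := hij
    have hjl := j.2
    have w1 := hw; rw [hi', walkL_append] at w1
    have w2 := hw; rw [hj', walkL_append] at w2
    have u1 := hu; rw [hi', noU_append] at u1
    have u2 := hu; rw [hj', noU_append] at u2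
    obtain ⟨c, hc1, hc2⟩ := w1
    obtain ⟨c', hc1', hc2'⟩ := w2
    have hcc : c = c' := hc2.1.symm.trans hc2'.1
    subst hcc
    have := ih (l.take i ++ d :: l.drop (j+1)).length
      (by simp; omega) _ rfl (by simp) ((walkL_append _ _ _ _ _).mpr ⟨c, hc1, hc2'⟩)
      ((noU_append _ _).mpr ⟨u1.1, u2.2.1, by
        intro p hp q hq
        exact u1.2.2 p hp q (by simpa using hq)⟩)
    refine this.trans ?_
    have e1 : wt x l = wt x (l.take i) + (x d.dst + wt x (l.drop (i+1))) := by
      conv_lhs => rw [hi']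
      rw [wt_append, wt_cons]
    rw [e1, wt_append, wt_cons]
    have e2 : l.drop (i+1) = (l.drop (i+1)).take (j - i) ++ l.drop (j+1) := by
      conv_lhs => rw [← List.take_append_drop (j - i) (l.drop (i+1))]
      rw [List.drop_drop]
      congr 2; omega
    rw [e2, wt_append]
    have := wt_nonneg x hx0 ((l.drop (i+1)).take (j - i))
    linarith

end Multigraph

namespace Multigraph

variable {V E : Type}

/-- Vertices of a walk indexed by natural numbers. -/
def Walk.vv {G : Multigraph V E} (W : G.Walk) (i : ℕ) : V :=
  W.verts ⟨min i W.len, by omega⟩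

/-- Edges of a walk indexed by natural numbers. -/
def Walk.ee {G : Multigraph V E} (W : G.Walk) (i : ℕ) : E :=
  W.edges ⟨min i (W.len - 1), by have := W.len_pos; omega⟩

lemma Walk.vv_eq {G : Multigraph V E} (W : G.Walk) (i : Fin (W.len + 1)) :
    W.vv i = W.verts i := by
  unfold Walk.vv; congr 1; ext; simp; omega

lemma Walk.ee_eq {G : Multigraph V E} (W : G.Walk) (i : Fin W.len) :
    W.ee i = W.edges i := by
  unfold Walk.ee; congr 1; ext; simp; omega

lemma Walk.ends_ee {G : Multigraph V E} (W : G.Walk) (i : ℕ) (hi : i < W.len) :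
    G.ends (W.ee i) = s(W.vv i, W.vv (i+1)) := by
  have := W.valid ⟨i, hi⟩
  rw [← W.ee_eq, ← W.vv_eq, ← W.vv_eq] at this
  exact this

lemma Walk.sum_vv {G : Multigraph V E} (W : G.Walk) (x : V → ℝ) :
    ∑ i, x (W.verts i) = ∑ i ∈ Finset.range (W.len + 1), x (W.vv i) := by
  rw [← Fin.sum_univ_eq_sum_range (fun i => x (W.vv i))]
  exact Finset.sum_congr rfl fun i _ => by rw [W.vv_eq]

lemma Walk.vv_zero {G : Multigraph V E} (W : G.Walk) {s : V} (h : W.IsSCycle s) : W.vv 0 = s := by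
  have := W.vv_eq 0
  exact this.trans h.1

lemma Walk.vv_len {G : Multigraph V E} (W : G.Walk) {s : V} (h : W.IsSCycle s) :
    W.vv W.len = s := by
  have := W.vv_eq (Fin.last _)
  exact this.trans h.2.1

lemma Walk.vv_ne {G : Multigraph V E} (W : G.Walk) {s : V} (h : W.IsSCycle s) (i : ℕ)
    (h0 : 0 < i) (h1 : i < W.len) : W.vv i ≠ s := by
  have := W.vv_eq ⟨i, by omega⟩
  rw [show W.vv i = _ from this]
  apply h.2.2.1
  · intro h; simp [Fin.ext_iff] at h; omega
  · intro h; simp [Fin.ext_iff] at h; omega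

lemma Walk.ee_ne {G : Multigraph V E} (W : G.Walk) {s : V} (h : W.IsSCycle s) (i : ℕ)
    (h1 : i + 1 < W.len) : W.ee i ≠ W.ee (i+1) := by
  have e1 := W.ee_eq ⟨i, by omega⟩
  have e2 := W.ee_eq ⟨i+1, by omega⟩
  rw [show W.ee i = _ from e1, show W.ee (i+1) = _ from e2]
  exact h.2.2.2.1 _ _ rfl

/-- The dart list of a sequence. -/
def seg (vv : ℕ → V) (ee : ℕ → E) (m : ℕ) : List (Drt V E) :=
  (List.range m).map fun i => ⟨vv i, ee i, vv (i+1)⟩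

lemma seg_succ (vv : ℕ → V) (ee : ℕ → E) (m : ℕ) :
    seg vv ee (m+1) = seg vv ee m ++ [⟨vv m, ee m, vv (m+1)⟩] := by
  simp [seg, List.range_succ]

lemma seg_walk (G : Multigraph V E) (vv : ℕ → V) (ee : ℕ → E) (m : ℕ)
    (h : ∀ i < m, G.ends (ee i) = s(vv i, vv (i+1))) : G.WalkL (vv 0) (seg vv ee m) (vv m) := by
  induction m with
  | zero => simp [seg, WalkL]
  | succ m ih =>
    rw [seg_succ, walkL_append]
    exact ⟨vv m, ih fun i hi => h i (by omega), rfl, h m (by omega), rfl⟩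

lemma seg_noU (vv : ℕ → V) (ee : ℕ → E) (m : ℕ)
    (h : ∀ i, i + 1 < m → ee i ≠ ee (i+1)) : NoU (seg vv ee m) := by
  induction m with
  | zero => simp [seg, NoU]
  | succ m ih =>
    rw [seg_succ, noU_append]
    refine ⟨ih fun i hi => h i (by omega), by simp [NoU], ?_⟩
    cases m with
    | zero => simp [seg]
    | succ m =>
      rw [seg_succ]
      simpa using h m (by omega)

lemma seg_wt (x : V → ℝ) (vv : ℕ → V) (ee : ℕ → E) (m : ℕ) :
    wt x (seg vv ee m) = ∑ i ∈ Finset.range m, x (vv (i+1)) := by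
  induction m with
  | zero => simp [seg, wt]
  | succ m ih =>
    rw [seg_succ, wt_append, ih, Finset.sum_range_succ]; simp [wt]

lemma walkL_mem (G : Multigraph V E) (a b : V) (l : List (Drt V E)) (h : G.WalkL a l b) :
    ∀ d ∈ l, G.ends d.e = s(d.src, d.dst) := by
  induction l generalizing a with
  | nil => simp
  | cons d l ih =>
    intro d' hd'
    rcases List.mem_cons.mp hd' with rfl | hd'
    · exact h.2.1
    · exact ih _ h.2.2 d' hd'

/-- Vertices linked to `s` by weight-zero walks. -/
def zeroReach (G : Multigraph V E) (s : V) (x : V → ℝ) : Set V :=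
  {r | ∃ q, G.WalkL r q s ∧ NoU q ∧ ∀ d ∈ q, x d.src = 0 ∧ x d.dst = 0}

lemma zeroReach_zero (G : Multigraph V E) (s : V) (x : V → ℝ) (hs : x s = 0) (r : V)
    (hr : r ∈ zeroReach G s x) : x r = 0 := by
  obtain ⟨q, h1, -, h3⟩ := hr
  cases q with
  | nil => rw [show r = s from h1]; exact hs
  | cons d q => rw [← h1.1]; exact (h3 d (by simp)).1

lemma zeroReach_closed (G : Multigraph V E) (s : V) (x : V → ℝ) (hs : x s = 0) (r w : V) (g : E)
    (hr : r ∈ zeroReach G s x) (hw : x w = 0) (hg : G.ends g = s(w, r)) :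
    w ∈ zeroReach G s x := by
  have hr0 := zeroReach_zero G s x hs r hr
  obtain ⟨q, h1, h2, h3⟩ := hr
  cases q with
  | nil =>
    refine ⟨[⟨w, g, r⟩], ⟨rfl, hg, h1⟩, by simp [NoU], ?_⟩
    simp [hw, hr0]
  | cons d q =>
    by_cases hd : d.e = g
    · have h4 := h1.2.1
      rw [hd, hg, h1.1, Sym2.eq_swap] at h4
      have h5 : w = d.dst := Sym2.congr_right.mp h4
      refine ⟨q, by rw [h5]; exact h1.2.2, List.IsChain.tail h2, fun d' hd' => h3 d' (by simp [hd'])⟩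
    · refine ⟨⟨w, g, r⟩ :: d :: q, ⟨rfl, hg, h1⟩, ?_, ?_⟩
      · exact List.isChain_cons_cons.mpr ⟨fun h => hd h.symm, h2⟩
      · intro d' hd'
        rcases List.mem_cons.mp hd' with rfl | hd'
        · exact ⟨hw, hr0⟩
        · exact h3 d' hd'

lemma wt_zero (x : V → ℝ) (l : List (Drt V E)) (h : ∀ d ∈ l, x d.dst = 0) : wt x l = 0 := by
  apply List.sum_eq_zero
  simp only [List.mem_map]
  rintro _ ⟨d, hd, rfl⟩
  exact h d hd

lemma one_le_of_boundary (G : Multigraph V E) (s : V) (x : V → ℝ) (hx : G.IsSCycleCover s x)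
    (p : List (Drt V E)) (v r : V) (g : E) (_hne : p ≠ []) (hp : G.WalkL s p v) (hu : NoU p)
    (hl : ∀ d ∈ p.getLast?, d.e ≠ g) (hg : G.ends g = s(v, r)) (hr : r ∈ zeroReach G s x)
    (hv : 0 < x v) : 1 ≤ wt x p := by
  have hr0 := zeroReach_zero G s x hx.2.1 r hr
  obtain ⟨q, h1, h2, h3⟩ := hr
  have h4 := one_le_wt G s x hx _ (p ++ ⟨v, g, r⟩ :: q) rfl (by simp)
    ((walkL_append _ _ _ _ _).mpr ⟨v, hp, rfl, hg, h1⟩) ((noU_append _ _).mpr ⟨hu, ?_, ?_⟩)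
  · rw [wt_append, wt_cons, wt_zero x q fun d hd => (h3 d hd).2] at h4
    simp only [hr0] at h4
    linarith
  · refine List.isChain_cons.mpr ⟨?_, h2⟩
    intro d hd he
    have hd' : d ∈ q := List.mem_of_mem_head? hd
    have h5 := walkL_mem G _ _ _ h1 d hd'
    have h6 : v ∈ s(d.src, d.dst) := by rw [← h5, ← he]; simp [hg]
    rcases Sym2.mem_iff.mp h6 with h | h
    · rw [h, (h3 d hd').1] at hv; exact lt_irrefl _ hv
    · rw [h, (h3 d hd').2] at hv; exact lt_irrefl _ hv
  · intro d hd d' hd'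
    simp only [List.head?_cons, Option.mem_some_iff] at hd'
    rw [← hd']
    exact hl d hd

lemma one_le_of_two (G : Multigraph V E) (s : V) (x : V → ℝ) (hx : G.IsSCycleCover s x)
    (v r r' : V) (g g' : E) (hgg : g ≠ g') (hg : G.ends g = s(v, r)) (hr : r ∈ zeroReach G s x)
    (hg' : G.ends g' = s(v, r')) (hr' : r' ∈ zeroReach G s x)
    (hv : 0 < x v) : 1 ≤ x v := by
  obtain ⟨q, h1, h2, h3⟩ := hr
  have := one_le_of_boundary G s x hx ((q.reverse.map Drt.flip) ++ [⟨r, g, v⟩]) v r' g' (by simp)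
    ((walkL_append _ _ _ _ _).mpr ⟨r, walkL_flip _ _ _ _ h1, rfl, by rw [hg, Sym2.eq_swap], by simp [WalkL]⟩)
    ((noU_append _ _).mpr ⟨noU_flip _ h2, by simp [NoU], ?_⟩) (by simpa using hgg) hg' hr' hv
  · rw [wt_append, wt_zero] at this
    · simpa [wt] using this
    · intro d hd
      simp only [List.mem_map, List.mem_reverse] at hd
      obtain ⟨d, hd, rfl⟩ := hd
      exact (h3 d hd).1
  · intro d hd d' hd'
    have hdm := List.mem_of_mem_getLast? hd
    simp only [List.mem_map, List.mem_reverse] at hdm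
    obtain ⟨d, hd1, rfl⟩ := hdm
    simp only [List.head?_cons, Option.mem_some_iff] at hd'
    subst hd'
    clear hd
    have hd' := hd1
    intro he
    have h5 := walkL_mem G _ _ _ h1 d hd'
    have h6 : v ∈ s(d.src, d.dst) := by rw [← h5, show d.e = g from he]; simp [hg]
    rcases Sym2.mem_iff.mp h6 with h | h
    · rw [h, (h3 d hd').1] at hv; exact lt_irrefl _ hv
    · rw [h, (h3 d hd').2] at hv; exact lt_irrefl _ hv

lemma sum_le_aux (h : ℕ → ℝ) (h0 : ∀ i, 0 ≤ h i) (N m k : ℕ) (φ : ℕ → ℕ) (hk : k < N)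
    (hφ : ∀ i < m, φ i < N ∧ φ i ≠ k) (hinj : ∀ i < m, ∀ j < m, φ i = φ j → i = j) :
    ∑ i ∈ Finset.range m, h (φ i) + h k ≤ ∑ i ∈ Finset.range N, h i := by
  have e1 : ∑ i ∈ Finset.range m, h (φ i) = ∑ j ∈ (Finset.range m).image φ, h j := by
    rw [Finset.sum_image]
    intro i hi j hj hij
    exact hinj i (by simpa using hi) j (by simpa using hj) hij
  have hk' : k ∉ (Finset.range m).image φ := by
    simp only [Finset.mem_image, Finset.mem_range, not_exists, not_and]
    intro i hi; exact (hφ i hi).2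
  rw [e1, add_comm, ← Finset.sum_insert hk']
  apply Finset.sum_le_sum_of_subset_of_nonneg
  · intro j hj
    simp only [Finset.mem_insert, Finset.mem_image, Finset.mem_range] at hj ⊢
    rcases hj with rfl | ⟨i, hi, rfl⟩
    · exact hk
    · exact (hφ i hi).1
  · intro i _ _; exact h0 i

/-- From any cover we get a half-integral cover that is tight on all tight `s`-cycles. -/
lemma exists_half_cover (G : Multigraph V E) (s : V) (x : V → ℝ) (hx : G.IsSCycleCover s x) :
    ∃ x' : V → ℝ, HalfIntegral x' ∧ G.IsSCycleCover s x' ∧ (∀ v, 0 < x' v → 0 < x v) ∧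
      ∀ W : G.Walk, W.IsSCycle s → ∑ i, x (W.verts i) = 1 → ∑ i, x' (W.verts i) ≤ 1 := by
  classical
  set R := zeroReach G s x with hR
  have hsR : s ∈ R := ⟨[], rfl, by simp [NoU], by simp⟩
  let B : V → E → Prop := fun v g => ∃ r ∈ R, G.ends g = s(v, r)
  let x' : V → ℝ := fun v => if v ∈ R ∨ ¬ ∃ g, B v g then 0 else
    if ∃ g g', g ≠ g' ∧ B v g ∧ B v g' then 1 else 1/2
  have hhalf : HalfIntegral x' := by
    intro v
    simp only [x']
    split_ifs <;> simp
  have hx'0 : ∀ v, 0 ≤ x' v := by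
    intro v; rcases hhalf v with h | h | h <;> rw [h] <;> norm_num
  have hx'1 : ∀ v, v ∉ R → ∀ g, B v g → 1/2 ≤ x' v := by
    intro v hv g hg
    simp only [x']
    rw [if_neg (by push Not; exact ⟨hv, g, hg⟩)]
    split_ifs <;> norm_num
  have hx'2 : ∀ v, v ∉ R → ∀ g g', g ≠ g' → B v g → B v g' → x' v = 1 := by
    intro v hv g g' hgg hg hg'
    simp only [x']
    rw [if_neg (by push Not; exact ⟨hv, g, hg⟩), if_pos ⟨g, g', hgg, hg, hg'⟩]
  have hpos : ∀ v, v ∉ R → ∀ g, B v g → 0 < x v := by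
    rintro v hv g ⟨r, hr, hg⟩
    refine lt_of_le_of_ne (hx.1 v) fun h0 => hv ?_
    exact zeroReach_closed G s x hx.2.1 r v g hr h0.symm hg
  have hx'3 : ∀ v, 0 < x' v → v ∉ R ∧ ∃ g, B v g := by
    intro v hv
    simp only [x'] at hv
    by_contra hc
    rw [if_pos (by tauto)] at hv
    exact lt_irrefl _ hv
  have hx'4 : ∀ v, 0 < x' v → 0 < x v := by
    intro v hv
    obtain ⟨h1, g, hg⟩ := hx'3 v hv
    exact hpos v h1 g hg
  have hx'5 : ∀ v, x' v = 1 → 1 ≤ x v := by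
    intro v hv
    have h1 := hx'4 v (by rw [hv]; norm_num)
    have h2 := hx'3 v (by rw [hv]; norm_num)
    simp only [x'] at hv
    rw [if_neg (by push Not; exact h2)] at hv
    split_ifs at hv with h3
    · obtain ⟨g, g', hgg, ⟨r, hr, hg⟩, ⟨r', hr', hg'⟩⟩ := h3
      exact one_le_of_two G s x hx v r r' g g' hgg hg hr hg' hr' h1
    · norm_num at hv
  refine ⟨x', hhalf, ⟨hx'0, ?_, ?_⟩, hx'4, ?_⟩
  · simp only [x']; rw [if_pos (Or.inl hsR)]
  · intro W hW
    have hex : ∃ k, k ≤ W.len ∧ W.vv k ∉ R := by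
      by_contra hc
      push Not at hc
      have h1 := hx.2.2 W hW
      rw [W.sum_vv, Finset.sum_eq_zero] at h1
      · norm_num at h1
      · intro i hi
        exact zeroReach_zero G s x hx.2.1 _ (hc i (by simp at hi; omega))
    obtain ⟨hiL, hiR⟩ := Nat.find_spec hex
    have himin : ∀ k < Nat.find hex, W.vv k ∈ R := by
      intro k hk
      have := Nat.find_min hex hk
      by_contra hc
      exact this ⟨by omega, hc⟩
    set i := Nat.find hex
    have hi0 : 0 < i := by
      rcases Nat.eq_zero_or_pos i with h | h
      · rw [h, W.vv_zero hW] at hiR; exact absurd hsR hiR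
      · exact h
    have hilen : i ≠ W.len := by
      intro h; rw [h, W.vv_len hW] at hiR; exact hiR hsR
    have hex2 : ∃ k, i < k ∧ k ≤ W.len ∧ W.vv k ∈ R :=
      ⟨W.len, by omega, le_rfl, by rw [W.vv_len hW]; exact hsR⟩
    obtain ⟨hj1, hj2, hj3⟩ := Nat.find_spec hex2
    have hjmin : ∀ k < Nat.find hex2, i < k → W.vv k ∉ R := by
      intro k hk hik hc
      exact Nat.find_min hex2 hk ⟨hik, by omega, hc⟩
    obtain ⟨j, hj⟩ : ∃ j, Nat.find hex2 = j + 1 := ⟨Nat.find hex2 - 1, by omega⟩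
    rw [hj] at hj1 hj2 hj3 hjmin
    have hjR : W.vv j ∉ R := by
      rcases Nat.lt_or_ge i j with h | h
      · exact hjmin j (by omega) h
      · rw [show j = i by omega]; exact hiR
    have hBi : B (W.vv i) (W.ee (i-1)) := by
      refine ⟨W.vv (i-1), himin _ (by omega), ?_⟩
      rw [W.ends_ee _ (by omega), Sym2.eq_swap, show i - 1 + 1 = i by omega]
    have hBj : B (W.vv j) (W.ee j) := ⟨W.vv (j+1), hj3, W.ends_ee _ (by omega)⟩
    rw [W.sum_vv]
    by_cases hij : i = j
    · have h1 : x' (W.vv i) = 1 := by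
        apply hx'2 _ hiR (W.ee (i-1)) (W.ee i)
        · have := W.ee_ne hW (i-1) (by omega)
          rwa [show i - 1 + 1 = i by omega] at this
        · exact hBi
        · rw [hij]; exact hBj
      rw [← h1]
      exact Finset.single_le_sum (f := fun i => x' (W.vv i)) (fun k _ => hx'0 _)
        (Finset.mem_range.mpr (by omega))
    · have h1 := hx'1 _ hiR _ hBi
      have h2 := hx'1 _ hjR _ hBj
      have h3 := sum_le_aux (fun k => x' (W.vv k)) (fun _ => hx'0 _) (W.len + 1) 1 j (fun _ => i)
        (by omega) (fun _ _ => ⟨by omega, hij⟩) (fun a ha b hb _ => by omega)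
      simp only [Finset.sum_const, Finset.card_range, one_smul] at h3
      linarith
  · intro W hW htight
    rw [W.sum_vv] at htight ⊢
    by_cases hA : ∃ i, i < W.len + 1 ∧ x' (W.vv i) = 1
    · obtain ⟨i, hi, h1⟩ := hA
      have h2 := hx'5 _ h1
      rw [Finset.sum_eq_single i]
      · rw [h1]
      · intro j hj hji
        by_contra hne
        have h3 := hx'4 _ (lt_of_le_of_ne (hx'0 _) (Ne.symm hne))
        have h4 := sum_le_aux (fun k => x (W.vv k)) (fun _ => hx.1 _) (W.len + 1) 1 j (fun _ => i)
          (by simpa using hj) (fun _ _ => ⟨by omega, Ne.symm hji⟩) (fun a ha b hb _ => by omega)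
        simp only [Finset.sum_const, Finset.card_range, one_smul] at h4
        linarith
      · intro h; simp at h; omega
    · push Not at hA
      set P := (Finset.range (W.len + 1)).filter fun i => 0 < x' (W.vv i) with hP
      have hle : ∀ i ∈ P, x' (W.vv i) ≤ 1/2 := by
        intro i hi
        simp only [hP, Finset.mem_filter, Finset.mem_range] at hi
        rcases hhalf (W.vv i) with h | h | h
        · rw [h]; norm_num
        · rw [h]
        · exact absurd h (hA i hi.1)
      have hsum : ∑ i ∈ Finset.range (W.len + 1), x' (W.vv i) = ∑ i ∈ P, x' (W.vv i) := by
        rw [hP, Finset.sum_filter]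
        apply Finset.sum_congr rfl
        intro i _
        split_ifs with h
        · rfl
        · exact le_antisymm (not_lt.mp h) (hx'0 _)
      have hcard : P.card ≤ 2 := by
        by_contra hc
        push Not at hc
        have hne : P.Nonempty := Finset.card_pos.mp (by omega)
        obtain ⟨i2, hi2⟩ : ((P.erase (P.min' hne)).erase (P.max' hne)).Nonempty := by
          apply Finset.card_pos.mp
          have h1 := Finset.pred_card_le_card_erase (s := P) (a := P.min' hne)
          have h2 := Finset.pred_card_le_card_erase (s := P.erase (P.min' hne)) (a := P.max' hne)
          omega
        simp only [Finset.mem_erase] at hi2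
        obtain ⟨hi2M, hi2m, hi2P⟩ := hi2
        have hlt1 := lt_of_le_of_ne (P.min'_le _ hi2P) (Ne.symm hi2m)
        have hlt3 := lt_of_le_of_ne (P.le_max' _ hi2P) hi2M
        have hm := P.min'_mem hne
        have hM := P.max'_mem hne
        set i1 := P.min' hne
        set i3 := P.max' hne
        simp only [hP, Finset.mem_filter, Finset.mem_range] at hm hM hi2P
        have p1 := hx'4 _ hm.2
        have p2 := hx'4 _ hi2P.2
        have p3 := hx'4 _ hM.2
        obtain ⟨-, g, r, hr, hg⟩ := hx'3 _ hi2P.2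
        by_cases hge : W.ee (i2-1) = g
        · have hne2 : W.ee i2 ≠ g := by
            rw [← hge]
            have := W.ee_ne hW (i2-1) (by omega)
            rw [show i2 - 1 + 1 = i2 by omega] at this
            exact this.symm
          have h5 := one_le_of_boundary G s x hx
            (seg (fun k => W.vv (W.len - k)) (fun k => W.ee (W.len - 1 - k)) (W.len - i2))
            (W.vv i2) r g ?_ ?_ ?_ ?_ hg hr p2
          · rw [seg_wt] at h5
            have h6 := sum_le_aux (fun k => x (W.vv k)) (fun _ => hx.1 _) (W.len + 1)
              (W.len - i2) i1 (fun k => W.len - (k + 1)) (by omega)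
              (fun _ _ => ⟨by omega, by omega⟩) (fun a ha b hb _ => by omega)
            linarith
          · rw [show W.len - i2 = (W.len - i2 - 1) + 1 by omega, seg_succ]; simp
          · have := seg_walk G (fun k => W.vv (W.len - k)) (fun k => W.ee (W.len - 1 - k))
              (W.len - i2) (by
                intro k hk
                rw [W.ends_ee _ (by omega), Sym2.eq_swap]
                rw [show W.len - 1 - k + 1 = W.len - k by omega,
                  show W.len - 1 - k = W.len - (k + 1) by omega])
            simp only [Nat.sub_zero] at this
            rw [W.vv_len hW, show W.len - (W.len - i2) = i2 by omega] at this
            exact this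
          · apply seg_noU
            intro k hk
            have := W.ee_ne hW (W.len - 1 - (k+1)) (by omega)
            rw [show W.len - 1 - (k+1) + 1 = W.len - 1 - k by omega] at this
            exact this.symm
          · rw [show W.len - i2 = (W.len - i2 - 1) + 1 by omega, seg_succ]
            simp only [List.getLast?_append, List.getLast?_singleton, Option.some_or,
              Option.mem_some_iff]
            rintro d rfl
            simp only
            rw [show W.len - 1 - (W.len - i2 - 1) = i2 by omega]
            exact hne2
        · have h5 := one_le_of_boundary G s x hx
            (seg W.vv W.ee i2) (W.vv i2) r g ?_ ?_ ?_ ?_ hg hr p2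
          · rw [seg_wt] at h5
            have h6 := sum_le_aux (fun k => x (W.vv k)) (fun _ => hx.1 _) (W.len + 1)
              i2 i3 (fun k => k + 1) (by omega)
              (fun _ _ => ⟨by omega, by omega⟩) (fun a ha b hb _ => by omega)
            linarith
          · rw [show i2 = (i2 - 1) + 1 by omega, seg_succ]; simp
          · have := seg_walk G W.vv W.ee i2 (fun k hk => W.ends_ee k (by omega))
            rwa [W.vv_zero hW] at this
          · apply seg_noU
            intro k hk
            exact W.ee_ne hW k (by omega)
          · rw [show i2 = (i2 - 1) + 1 by omega, seg_succ]
            simp only [List.getLast?_append, List.getLast?_singleton, Option.some_or,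
              Option.mem_some_iff]
            rintro d rfl
            exact hge
      rw [hsum]
      calc ∑ i ∈ P, x' (W.vv i) ≤ ∑ i ∈ P, (1/2 : ℝ) := Finset.sum_le_sum hle
        _ = P.card * (1/2) := by simp
        _ ≤ 2 * (1/2) := by gcongr; exact_mod_cast hcard
        _ = 1 := by norm_num

end Multigraph

namespace Multigraph

variable {V E : Type}

open Classical in
/-- Number of uses of an edge. -/
noncomputable def Walk.ecount {G : Multigraph V E} (W : G.Walk) (e : E) : ℕ :=
  ((Finset.range W.len).filter fun i => W.ee i = e).card

open Classical in
lemma Walk.vertCount_eq {G : Multigraph V E} (W : G.Walk) (v : V) :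
    W.vertCount v = ((Finset.range (W.len + 1)).filter fun i => W.vv i = v).card := by
  unfold Walk.vertCount
  rw [Nat.card_eq_fintype_card, Fintype.card_subtype]
  refine Finset.card_bij (fun (i : Fin (W.len + 1)) _ => (i : ℕ)) ?_ ?_ ?_
  · intro i hi
    simp only [Finset.mem_filter, Finset.mem_univ, true_and] at hi
    simp only [Finset.mem_filter, Finset.mem_range]
    exact ⟨i.2, by rw [W.vv_eq]; exact hi⟩
  · intro i _ j _ h; exact Fin.ext h
  · intro i hi
    simp only [Finset.mem_filter, Finset.mem_range] at hi
    refine ⟨⟨i, hi.1⟩, ?_, rfl⟩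
    simp only [Finset.mem_filter, Finset.mem_univ, true_and]
    rw [← W.vv_eq]; exact hi.2

open Classical in
/-- Total value around a vertex. -/
noncomputable def dsum [Fintype E] (G : Multigraph V E) (f : E → ℝ) (v : V) : ℝ :=
  ∑ e, if v ∈ G.ends e then f e else 0

open Classical in
lemma Walk.dsum_ecount [Fintype E] {G : Multigraph V E} (hloop : G.LoopFree) (W : G.Walk) (v : V) :
    dsum G (fun e => (W.ecount e : ℝ)) v =
      (((Finset.range W.len).filter fun i => W.vv i = v).card : ℝ) +
      (((Finset.range W.len).filter fun i => W.vv (i+1) = v).card : ℝ) := by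
  classical
  unfold dsum
  have h1 : ∀ e, (if v ∈ G.ends e then (W.ecount e : ℝ) else 0) =
      ∑ i ∈ Finset.range W.len, if W.ee i = e then (if v ∈ G.ends e then (1:ℝ) else 0) else 0 := by
    intro e
    split_ifs with h
    · rw [Walk.ecount, Finset.card_filter]; push_cast
      convert rfl
    · simp
  simp_rw [h1]
  rw [Finset.sum_comm]
  simp only [Finset.sum_ite_eq, Finset.mem_univ, if_true]
  rw [Finset.card_filter, Finset.card_filter]
  push_cast
  rw [← Finset.sum_add_distrib]
  apply Finset.sum_congr rfl
  intro i hi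
  have h2 := W.ends_ee i (by simpa using hi)
  have h3 : W.vv i ≠ W.vv (i+1) := by
    intro h
    apply hloop (W.ee i)
    rw [h2, h]; simp
  have h5 : v ∈ G.ends (W.ee i) ↔ v = W.vv i ∨ v = W.vv (i+1) := by rw [h2, Sym2.mem_iff]
  simp only [h5]
  by_cases ha : W.vv i = v
  · have hb : ¬ W.vv (i+1) = v := fun hb => h3 (ha.trans hb.symm)
    simp [ha, hb]
  · by_cases hb : W.vv (i+1) = v
    · simp [ha, hb]
    · simp [ha, hb, Ne.symm ha, Ne.symm hb]

lemma Walk.dsum_ecount_ne [Fintype E] {G : Multigraph V E} (hloop : G.LoopFree) (W : G.Walk)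
    {s : V} (hW : W.IsSCycle s) (v : V) (hv : v ≠ s) :
    dsum G (fun e => (W.ecount e : ℝ)) v = 2 * W.vertCount v := by
  classical
  rw [W.dsum_ecount hloop, W.vertCount_eq]
  have h0 := W.vv_zero hW
  have h1 := W.vv_len hW
  have e1 : ((Finset.range (W.len+1)).filter fun i => W.vv i = v).card =
      ((Finset.range W.len).filter fun i => W.vv i = v).card := by
    rw [Finset.range_add_one, Finset.filter_insert, if_neg]
    rw [h1]; exact hv.symm
  have e2 : ((Finset.range (W.len+1)).filter fun i => W.vv i = v).card =
      ((Finset.range W.len).filter fun i => W.vv (i+1) = v).card := by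
    rw [Finset.card_filter, Finset.sum_range_succ', ← Finset.card_filter, if_neg]
    · simp
    · rw [h0]; exact hv.symm
  rw [← e2, ← e1]; ring

lemma Walk.dsum_ecount_s [Fintype E] {G : Multigraph V E} (hloop : G.LoopFree) (W : G.Walk)
    {s : V} (hW : W.IsSCycle s) :
    dsum G (fun e => (W.ecount e : ℝ)) s = 2 := by
  classical
  rw [W.dsum_ecount hloop]
  have h0 := W.vv_zero hW
  have h1 := W.vv_len hW
  have hp := W.len_pos
  have e1 : ((Finset.range W.len).filter fun i => W.vv i = s) = {0} := by
    ext i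
    simp only [Finset.mem_filter, Finset.mem_range, Finset.mem_singleton]
    constructor
    · rintro ⟨h2, h3⟩
      by_contra h4
      exact W.vv_ne hW i (by omega) h2 h3
    · rintro rfl; exact ⟨hp, h0⟩
  have e2 : ((Finset.range W.len).filter fun i => W.vv (i+1) = s) = {W.len - 1} := by
    ext i
    simp only [Finset.mem_filter, Finset.mem_range, Finset.mem_singleton]
    constructor
    · rintro ⟨h2, h3⟩
      by_contra h4
      exact W.vv_ne hW (i+1) (by omega) (by omega) h3
    · rintro rfl
      exact ⟨by omega, by rw [show W.len - 1 + 1 = W.len by omega]; exact h1⟩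
  rw [e1, e2]; norm_num

lemma Walk.ecount_le {G : Multigraph V E} (W : G.Walk)
    {s : V} (hW : W.IsSCycle s) (v : V) (e : E) (he : v ∈ G.ends e) :
    W.ecount e ≤ W.vertCount v := by
  classical
  rw [W.vertCount_eq, Walk.ecount]
  apply Finset.card_le_card_of_injOn (fun i => if W.vv i = v then i else i + 1)
  · intro i hi
    simp only [Finset.coe_filter, Finset.mem_range, Set.mem_ofPred_eq] at hi ⊢
    split_ifs with h
    · exact ⟨by omega, h⟩
    · refine ⟨by omega, ?_⟩
      have h2 := W.ends_ee i hi.1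
      rw [hi.2] at h2
      rw [h2, Sym2.mem_iff] at he
      rcases he with he | he
      · exact absurd he.symm h
      · exact he.symm
  · intro i hi j hj hij
    simp only [Finset.coe_filter, Finset.mem_range, Set.mem_ofPred_eq] at hi hj
    simp only at hij
    by_contra hne
    have hc : i + 1 = j ∨ j + 1 = i := by split_ifs at hij <;> omega
    rcases hc with hc | hc
    · exact W.ee_ne hW i (by omega) (by rw [hc, hi.2, hj.2])
    · exact W.ee_ne hW j (by omega) (by rw [hc, hi.2, hj.2])

lemma Walk.two_le_len {G : Multigraph V E} (hloop : G.LoopFree) (W : G.Walk)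
    {s : V} (hW : W.IsSCycle s) : 2 ≤ W.len := by
  by_contra hc
  have hp := W.len_pos
  have h1 : W.len = 1 := by omega
  have h2 := W.ends_ee 0 (by omega)
  apply hloop (W.ee 0)
  have h3 := W.vv_len hW
  rw [h1] at h3
  rw [h2, W.vv_zero hW, h3]
  simp

lemma Walk.exists_ne {G : Multigraph V E} (hloop : G.LoopFree) (W : G.Walk)
    {s : V} (hW : W.IsSCycle s) : ∃ v, v ≠ s ∧ 1 ≤ W.vertCount v := by
  classical
  have h2 := W.two_le_len hloop hW
  refine ⟨W.vv 1, W.vv_ne hW 1 (by omega) (by omega), ?_⟩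
  rw [W.vertCount_eq]
  apply Finset.card_pos.mpr
  exact ⟨1, by simp; omega⟩

lemma Walk.sum_vertCount [Fintype V] {G : Multigraph V E} (W : G.Walk) (x : V → ℝ) :
    ∑ i, x (W.verts i) = ∑ v, (W.vertCount v : ℝ) * x v := by
  classical
  rw [W.sum_vv, ← Finset.sum_fiberwise (Finset.range (W.len+1)) W.vv]
  apply Finset.sum_congr rfl
  intro v _
  rw [W.vertCount_eq, Finset.sum_congr rfl (g := fun _ => x v)]
  · simp
  · intro i hi
    rw [(Finset.mem_filter.mp hi).2]

lemma scycle_finite [Fintype V] [Fintype E] (G : Multigraph V E) (s : V) :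
    Finite {W : G.Walk // W.IsSCycle s} := by
  classical
  have hlen : ∀ W : {W : G.Walk // W.IsSCycle s}, W.1.len < 2 * Fintype.card E + 1 := by
    rintro ⟨W, hW⟩
    have h1 : W.len = ∑ e : E, Nat.card {i : Fin W.len // W.edges i = e} := by
      have := Finset.card_eq_sum_card_fiberwise (f := W.edges) (s := Finset.univ)
        (t := Finset.univ) (by simp)
      simp only [Finset.card_univ, Fintype.card_fin] at this
      refine this.trans ?_
      apply Finset.sum_congr rfl
      intro e _
      rw [Nat.card_eq_fintype_card, Fintype.card_subtype]
    have h2 : W.len ≤ ∑ e : E, 2 := by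
      rw [h1]
      exact Finset.sum_le_sum fun e _ => hW.2.2.2.2 e
    simp at h2
    show W.len < _
    omega
  let N := 2 * Fintype.card E + 1
  let F : {W : G.Walk // W.IsSCycle s} →
      Σ n : Fin N, (Fin (n + 1) → V) × (Fin n → E) :=
    fun W => ⟨⟨W.1.len, hlen W⟩, W.1.verts, W.1.edges⟩
  apply Finite.of_injective F
  rintro ⟨⟨n, hn, vs, es, h⟩, hW⟩ ⟨⟨n', hn', vs', es', h'⟩, hW'⟩ heq
  simp only [F, Sigma.mk.injEq, Fin.mk.injEq] at heq
  obtain ⟨rfl, h2⟩ := heq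
  simp only [heq_eq_eq, Prod.mk.injEq] at h2
  obtain ⟨rfl, rfl⟩ := h2
  rfl

/-- Fractional edge relaxation. -/
def InP [Fintype E] (G : Multigraph V E) (s : V) (f : E → ℝ) : Prop :=
  (∀ e, 0 ≤ f e) ∧ (∀ v, v ≠ s → dsum G f v ≤ 2) ∧
    ∀ v, v ≠ s → ∀ e, v ∈ G.ends e → 2 * f e ≤ dsum G f v

lemma exists_inP [Fintype V] [Fintype E] (G : Multigraph V E) (hloop : G.LoopFree) (s : V)
    [Fintype {W : G.Walk // W.IsSCycle s}] (y : {W : G.Walk // W.IsSCycle s} → ℝ)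
    (hy : ∀ W, 0 ≤ y W) (hp : ∀ v, v ≠ s → ∑ W, (W.1.vertCount v : ℝ) * y W ≤ 1) :
    ∃ f : E → ℝ, InP G s f ∧ dsum G f s = 2 * ∑ W, y W := by
  classical
  let f : E → ℝ := fun e => ∑ W, (W.1.ecount e : ℝ) * y W
  have hd : ∀ v, dsum G f v = ∑ W, dsum G (fun e => (W.1.ecount e : ℝ)) v * y W := by
    intro v
    unfold dsum
    simp_rw [Finset.sum_mul]
    rw [Finset.sum_comm]
    apply Finset.sum_congr rfl
    intro e _
    split_ifs <;> simp [f]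
  have hd1 : ∀ v, v ≠ s → dsum G f v = 2 * ∑ W, (W.1.vertCount v : ℝ) * y W := by
    intro v hv
    rw [hd, Finset.mul_sum]
    apply Finset.sum_congr rfl
    intro W _
    rw [W.1.dsum_ecount_ne hloop W.2 v hv]; ring
  refine ⟨f, ⟨?_, ?_, ?_⟩, ?_⟩
  · intro e
    exact Finset.sum_nonneg fun W _ => mul_nonneg (by positivity) (hy W)
  · intro v hv
    rw [hd1 v hv]; linarith [hp v hv]
  · intro v hv e he
    rw [hd1 v hv]
    have : f e ≤ ∑ W, (W.1.vertCount v : ℝ) * y W := by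
      apply Finset.sum_le_sum
      intro W _
      apply mul_le_mul_of_nonneg_right _ (hy W)
      exact_mod_cast W.1.ecount_le W.2 v e he
    linarith
  · rw [hd, Finset.mul_sum]
    apply Finset.sum_congr rfl
    intro W _
    rw [W.1.dsum_ecount_s hloop W.2]

end Multigraph

namespace Multigraph

variable {V E : Type}

lemma dsum_add_smul [Fintype E] (G : Multigraph V E) (f d : E → ℝ) (t : ℝ) (v : V) :
    dsum G (f + t • d) v = dsum G f v + t * dsum G d v := by
  classical
  unfold dsum
  rw [Finset.mul_sum, ← Finset.sum_add_distrib]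
  apply Finset.sum_congr rfl
  intro e _
  split_ifs <;> simp

lemma dsum_continuous [Fintype E] (G : Multigraph V E) (v : V) :
    Continuous fun f : E → ℝ => dsum G f v := by
  classical
  unfold dsum
  apply continuous_finsetSum
  intro e _
  split_ifs
  · exact continuous_apply e
  · exact continuous_const

lemma inP_isClosed [Fintype E] (G : Multigraph V E) (s : V) :
    IsClosed {f : E → ℝ | InP G s f} := by
  have : {f : E → ℝ | InP G s f} = (⋂ e, {f : E → ℝ | 0 ≤ f e}) ∩
      ((⋂ v, ⋂ _ : v ≠ s, {f : E → ℝ | dsum G f v ≤ 2}) ∩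
      (⋂ v, ⋂ _ : v ≠ s, ⋂ e, ⋂ _ : v ∈ G.ends e, {f : E → ℝ | 2 * f e ≤ dsum G f v})) := by
    ext f; simp [InP]
  rw [this]
  refine IsClosed.inter ?_ (IsClosed.inter ?_ ?_)
  · exact isClosed_iInter fun e => isClosed_le continuous_const (continuous_apply e)
  · exact isClosed_iInter fun v => isClosed_iInter fun _ =>
      isClosed_le (dsum_continuous G v) continuous_const
  · exact isClosed_iInter fun v => isClosed_iInter fun _ => isClosed_iInter fun e =>
      isClosed_iInter fun _ =>
      isClosed_le (continuous_const.mul (continuous_apply e)) (dsum_continuous G v)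

lemma exists_end_ne (G : Multigraph V E) (hloop : G.LoopFree) (s : V) (e : E) :
    ∃ v, v ≠ s ∧ v ∈ G.ends e := by
  have h := hloop e
  induction hz : G.ends e with
  | _ a b =>
    rw [hz] at h
    have hab : a ≠ b := by simpa using h
    by_cases ha : a = s
    · exact ⟨b, by rintro rfl; exact hab ha, by simp⟩
    · exact ⟨a, ha, by simp⟩

lemma inP_le_one [Fintype E] (G : Multigraph V E) (hloop : G.LoopFree) (s : V) (f : E → ℝ)
    (hf : InP G s f) (e : E) : f e ≤ 1 := by
  obtain ⟨v, hv, he⟩ := exists_end_ne G hloop s e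
  have h1 := hf.2.2 v hv e he
  have h2 := hf.2.1 v hv
  linarith

lemma inP_isCompact [Fintype E] (G : Multigraph V E) (hloop : G.LoopFree) (s : V) :
    IsCompact {f : E → ℝ | InP G s f} := by
  apply IsCompact.of_isClosed_subset (isCompact_Icc (a := (0 : E → ℝ)) (b := 1))
    (inP_isClosed G s)
  intro f hf
  exact ⟨fun e => hf.1 e, fun e => inP_le_one G hloop s f hf e⟩

lemma eventually_affine (a b : ℝ) (ha : 0 ≤ a) (hab : a = 0 → b = 0) :
    ∀ᶠ t in nhds (0:ℝ), 0 ≤ a + t * b := by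
  rcases ha.eq_or_lt with h | h
  · rw [hab h.symm, ← h]; simp
  · have hc : Continuous fun t : ℝ => a + t * b := by fun_prop
    have : ∀ᶠ t in nhds (0:ℝ), 0 < a + t * b :=
      hc.continuousAt.eventually (lt_mem_nhds (by simpa using h))
    exact this.mono fun t ht => ht.le

/-- An extreme optimal point of the edge polytope admits no perturbation. -/
lemma exists_rigid [Fintype V] [Fintype E] (G : Multigraph V E) (hloop : G.LoopFree) (s : V)
    (f₀ : E → ℝ) (hf₀ : InP G s f₀) :
    ∃ f, InP G s f ∧ dsum G f₀ s ≤ dsum G f s ∧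
      ∀ d : E → ℝ, (∀ e, f e = 0 → d e = 0) → (∀ v, v ≠ s → dsum G f v = 2 → dsum G d v = 0) →
        (∀ v, v ≠ s → ∀ e, v ∈ G.ends e → 2 * f e = dsum G f v → 2 * d e = dsum G d v) →
        d = 0 := by
  classical
  obtain ⟨fm, hfm, hmax⟩ := (inP_isCompact G hloop s).exists_isMaxOn ⟨f₀, hf₀⟩
    (dsum_continuous G s).continuousOn
  have hmax' : ∀ g, InP G s g → dsum G g s ≤ dsum G fm s := fun g hg => hmax hg
  set K : Set (E → ℝ) := {f | InP G s f} ∩ {f | dsum G f s = dsum G fm s} with hK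
  have hKc : IsCompact K := (inP_isCompact G hloop s).inter_right
    (isClosed_eq (dsum_continuous G s) continuous_const)
  obtain ⟨f, hfe⟩ := hKc.extremePoints_nonempty ⟨fm, hfm, rfl⟩
  have hfK : f ∈ K := hfe.1
  obtain ⟨hfP, hfM⟩ := hfK
  have hfP : InP G s f := hfP
  have hfM : dsum G f s = dsum G fm s := hfM
  refine ⟨f, hfP, hfM ▸ hmax' f₀ hf₀, ?_⟩
  intro d h0 h1 h2
  have hev : ∀ᶠ t in nhds (0:ℝ), InP G s (f + t • d) := by
    have e1 : ∀ᶠ t in nhds (0:ℝ), ∀ e, 0 ≤ f e + t * d e :=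
      Filter.eventually_all.mpr fun e => eventually_affine _ _ (hfP.1 e) (h0 e)
    have e2 : ∀ᶠ t in nhds (0:ℝ), ∀ v, v ≠ s → 0 ≤ (2 - dsum G f v) + t * (- dsum G d v) := by
      rw [Filter.eventually_all]; intro v
      by_cases hv : v = s
      · simp [hv]
      · have := eventually_affine (2 - dsum G f v) (- dsum G d v) (by linarith [hfP.2.1 v hv])
          (fun h => by rw [h1 v hv (by linarith)]; simp)
        exact this.mono fun t ht _ => ht
    have e3 : ∀ᶠ t in nhds (0:ℝ), ∀ v, ∀ e, v ≠ s → v ∈ G.ends e →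
        0 ≤ (dsum G f v - 2 * f e) + t * (dsum G d v - 2 * d e) := by
      rw [Filter.eventually_all]; intro v
      rw [Filter.eventually_all]; intro e
      by_cases hv : v = s
      · simp [hv]
      by_cases he : v ∈ G.ends e
      · have := eventually_affine (dsum G f v - 2 * f e) (dsum G d v - 2 * d e)
          (by linarith [hfP.2.2 v hv e he])
          (fun h => by rw [h2 v hv e he (by linarith)]; simp)
        exact this.mono fun t ht _ _ => ht
      · simp [he]
    filter_upwards [e1, e2, e3] with t t1 t2 t3
    refine ⟨fun e => by simpa using t1 e, fun v hv => ?_, fun v hv e he => ?_⟩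
    · rw [dsum_add_smul]; linarith [t2 v hv]
    · rw [dsum_add_smul]
      have := t3 v e hv he
      simp only [Pi.add_apply, Pi.smul_apply, smul_eq_mul]
      linarith
  obtain ⟨ε, hε, hball⟩ := Metric.eventually_nhds_iff.mp hev
  have hp : InP G s (f + (ε/2) • d) := hball (by simp [abs_of_pos hε]; linarith)
  have hm : InP G s (f + (-(ε/2)) • d) := hball (by simp [abs_of_pos hε]; linarith)
  have a1 := hmax' _ hp
  have a2 := hmax' _ hm
  rw [dsum_add_smul, hfM] at a1 a2
  have hpK : f + (ε/2) • d ∈ K := ⟨hp, by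
    show dsum G _ s = _
    rw [dsum_add_smul, hfM]; linarith⟩
  have hmK : f + (-(ε/2)) • d ∈ K := ⟨hm, by
    show dsum G _ s = _
    rw [dsum_add_smul, hfM]; linarith⟩
  have := (mem_extremePoints.mp hfe).2 _ hpK _ hmK
    ⟨1/2, 1/2, by norm_num, by norm_num, by norm_num, by
      ext e; simp; ring⟩
  have h3 := this.1
  ext e
  have h4 := congrFun h3 e
  simp at h4
  rcases h4 with h4 | h4
  · linarith
  · simpa using h4

/-- Half-integrality of the edge relaxation. -/
lemma exists_half_flow [Fintype V] [Fintype E] (G : Multigraph V E) (hloop : G.LoopFree) (s : V)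
    (f₀ : E → ℝ) (hf₀ : InP G s f₀) :
    ∃ f, InP G s f ∧ dsum G f₀ s ≤ dsum G f s ∧ (∀ e, f e = 0 ∨ f e = 1/2 ∨ f e = 1) ∧
      (∀ e, s ∈ G.ends e → f e ≠ 1/2) ∧
      ∀ v, v ≠ s → (∀ e, v ∈ G.ends e → f e ≠ 1/2) ∨
        ∃ e₁ e₂, e₁ ≠ e₂ ∧ ∀ e, (v ∈ G.ends e ∧ f e = 1/2) ↔ (e = e₁ ∨ e = e₂) := by
  classical
  obtain ⟨f, hfP, hge, hrig⟩ := exists_rigid G hloop s f₀ hf₀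
  have hle1 := inP_le_one G hloop s f hfP
  let Fr : E → Prop := fun e => 0 < f e ∧ f e < 1
  have hnF : ∀ e, ¬ Fr e → f e = 0 ∨ f e = 1 := by
    intro e he
    by_contra hc
    push Not at hc
    exact he ⟨lt_of_le_of_ne (hfP.1 e) (Ne.symm hc.1), lt_of_le_of_ne (hle1 e) hc.2⟩
  let A : V → Finset E := fun v => Finset.univ.filter fun e => Fr e ∧ v ∈ G.ends e
  -- decomposition
  have hdec : ∀ v, ∃ n : ℕ, dsum G f v = n + ∑ e ∈ A v, f e := by
    intro v
    refine ⟨(Finset.univ.filter fun e => ¬ Fr e ∧ v ∈ G.ends e ∧ f e = 1).card, ?_⟩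
    rw [Finset.card_filter]
    push_cast
    rw [Finset.sum_filter, ← Finset.sum_add_distrib]
    unfold dsum
    apply Finset.sum_congr rfl
    intro e _
    by_cases he : v ∈ G.ends e
    · by_cases hF : Fr e
      · simp [he, hF]
      · rcases hnF e hF with h | h <;> simp [he, hF, h]
    · simp [he]
  have hdsupp : ∀ d : E → ℝ, (∀ e, ¬ Fr e → d e = 0) → ∀ v, dsum G d v = ∑ e ∈ A v, d e := by
    intro d hd v
    rw [Finset.sum_filter]
    unfold dsum
    apply Finset.sum_congr rfl
    intro e _
    by_cases he : v ∈ G.ends e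
    · by_cases hF : Fr e
      · simp [he, hF]
      · simp [he, hF, hd e hF]
    · simp [he]
  let C1 : V → Prop := fun v => ∃ e ∈ A v, 2 * f e = dsum G f v
  let T : V → Prop := fun v => v ≠ s ∧ (A v).Nonempty ∧ (C1 v ∨ dsum G f v = 2)
  -- the functional
  let L : V → (E → ℝ) → ℝ := fun v d =>
    dsum G d v - 2 * (if h : C1 v then d h.choose else 0)
  have hkill : ∀ d : E → ℝ, (∀ e, ¬ Fr e → d e = 0) → (∀ v, T v → L v d = 0) → d = 0 := by
    intro d hd hL
    have hAmem : ∀ v e, v ∈ G.ends e → d e ≠ 0 → e ∈ A v := by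
      intro v e he hde
      simp only [A, Finset.mem_filter, Finset.mem_univ, true_and]
      refine ⟨?_, he⟩
      by_contra hc; exact hde (hd e hc)
    apply hrig d
    · intro e he
      apply hd; intro hF; have := hF.1; linarith
    · intro v hv hS
      by_cases hne : (A v).Nonempty
      · have h1 := hL v ⟨hv, hne, Or.inr hS⟩
        have h2 : ¬ C1 v := by
          rintro ⟨e, he, he2⟩
          simp only [A, Finset.mem_filter, Finset.mem_univ, true_and] at he
          have := he.1.2
          linarith
        simp only [L, dif_neg h2] at h1
        linarith
      · rw [hdsupp d hd, Finset.not_nonempty_iff_eq_empty.mp hne]; simp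
    · intro v hv e he hS
      by_cases hne : (A v).Nonempty
      · by_cases hC : C1 v
        · have h1 := hL v ⟨hv, hne, Or.inl hC⟩
          simp only [L, dif_pos hC] at h1
          obtain ⟨h2, h3⟩ := hC.choose_spec
          set e0 := hC.choose
          simp only [A, Finset.mem_filter, Finset.mem_univ, true_and] at h2
          by_cases hee : e = e0
          · rw [hee]; linarith
          · -- only e and e0 carry weight
            have hfe : f e = f e0 := by linarith
            have hs2 : dsum G f v = f e + f e0 := by linarith
            have hz : ∀ e', v ∈ G.ends e' → e' ≠ e → e' ≠ e0 → f e' = 0 := by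
              intro e' he' hn1 hn2
              have h4 : ∑ e'' ∈ ({e', e, e0} : Finset E), (if v ∈ G.ends e'' then f e'' else 0) ≤
                  dsum G f v := by
                unfold dsum
                apply Finset.sum_le_sum_of_subset_of_nonneg (Finset.subset_univ _)
                intro e'' _ _
                split_ifs
                · exact hfP.1 _
                · exact le_rfl
              rw [Finset.sum_insert (by simp [hn1, hn2]), Finset.sum_insert (by simp [hee]),
                Finset.sum_singleton, if_pos he', if_pos he, if_pos h2.2] at h4
              linarith [hfP.1 e']
            have hs3 : dsum G d v = d e + d e0 := by
              unfold dsum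
              rw [← Finset.sum_subset (Finset.subset_univ ({e, e0} : Finset E)),
                Finset.sum_insert (by simp [hee]), Finset.sum_singleton, if_pos he, if_pos h2.2]
              intro e' _ he'
              simp only [Finset.mem_insert, Finset.mem_singleton, not_or] at he'
              split_ifs with h5
              · apply hd; intro hF; have := hF.1; linarith [hz e' h5 he'.1 he'.2]
              · rfl
            linarith
        · have hnF' : ¬ Fr e := by
            intro hF
            exact hC ⟨e, by simp [A, hF, he], hS⟩
          rw [hd e hnF']
          rcases hnF e hnF' with h | h
          · -- all zero at v
            exfalso
            obtain ⟨e', he'⟩ := hne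
            simp only [A, Finset.mem_filter, Finset.mem_univ, true_and] at he'
            have h4 : f e' ≤ dsum G f v := by
              unfold dsum
              have := Finset.single_le_sum (f := fun e => if v ∈ G.ends e then f e else 0)
                (s := Finset.univ) (fun i _ => by
                  split_ifs
                  · exact hfP.1 _
                  · exact le_rfl) (Finset.mem_univ e')
              simpa [he'.2] using this
            have := he'.1.1
            linarith
          · have h1 := hL v ⟨hv, hne, Or.inr (by linarith)⟩
            simp only [L, dif_neg hC] at h1
            linarith
      · have hem := Finset.not_nonempty_iff_eq_empty.mp hne
        rw [hdsupp d hd, hem]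
        have : d e = 0 := by
          by_contra hc
          have := hAmem v e he hc
          rw [hem] at this; simp at this
        simp [this]
  -- counting
  have hcard : Fintype.card {e // Fr e} ≤ Fintype.card {v // T v} := by
    by_contra hc
    push Not at hc
    let ext : ({e // Fr e} → ℝ) → E → ℝ := fun d e => if h : Fr e then d ⟨e, h⟩ else 0
    have hextadd : ∀ d d', ext (d + d') = ext d + ext d' := by
      intro d d'; funext e; simp only [ext, Pi.add_apply]; split_ifs <;> simp
    have hextsmul : ∀ (c : ℝ) d, ext (c • d) = c • ext d := by
      intro c d; funext e; simp only [ext, Pi.smul_apply]; split_ifs <;> simp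
    have hLadd : ∀ v d d', L v (d + d') = L v d + L v d' := by
      intro v d d'
      have := dsum_add_smul G d d' 1 v
      rw [one_smul, one_mul] at this
      simp only [L, this]
      split_ifs
      · simp only [Pi.add_apply]; ring
      · ring
    have hLsmul : ∀ v (c : ℝ) d, L v (c • d) = c * L v d := by
      intro v c d
      have := dsum_add_smul G 0 d c v
      rw [zero_add] at this
      have h0 : dsum G 0 v = 0 := by simp [dsum]
      simp only [L, this, h0]
      split_ifs
      · simp only [Pi.smul_apply, smul_eq_mul]; ring
      · ring
    let Φ : ({e // Fr e} → ℝ) →ₗ[ℝ] ({v // T v} → ℝ) :=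
      { toFun := fun d v => L v (ext d)
        map_add' := by intro d d'; funext v; simp only [hextadd, hLadd, Pi.add_apply]
        map_smul' := by
          intro c d; funext v
          simp only [hextsmul, hLsmul, Pi.smul_apply, smul_eq_mul, RingHom.id_apply] }
    have hker : LinearMap.ker Φ ≠ ⊥ := LinearMap.ker_ne_bot_of_finrank_lt (by simpa using hc)
    obtain ⟨d, hd, hd0⟩ := (Submodule.ne_bot_iff _).mp hker
    have hz := hkill (ext d) (fun e he => by simp [ext, he]) (fun v hv => by
      have := congrFun (LinearMap.mem_ker.mp hd) ⟨v, hv⟩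
      simpa [Φ] using this)
    apply hd0
    funext e
    have := congrFun hz e
    simpa [ext, e.2] using this
  have hdeg : ∀ v, T v → 2 ≤ (A v).card := by
    rintro v ⟨hv, hne, hT⟩
    by_contra hc
    have h1 : (A v).card = 1 := by have := Finset.card_pos.mpr hne; omega
    obtain ⟨e0, he0⟩ := Finset.card_eq_one.mp h1
    have hF : Fr e0 := by
      have : e0 ∈ A v := by rw [he0]; simp
      simp only [A, Finset.mem_filter] at this
      exact this.2.1
    obtain ⟨n, hn⟩ := hdec v
    rw [he0, Finset.sum_singleton] at hn
    have hF1 := hF.1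
    have hF2 := hF.2
    rcases hT with ⟨e, he, h2⟩ | h2
    · rw [he0, Finset.mem_singleton] at he
      subst he
      have h3 : (0:ℝ) < n := by linarith
      have h4 : (n:ℝ) < 1 := by linarith
      norm_cast at h3 h4
      omega
    · have h3 : (1:ℝ) < n := by linarith
      have h4 : (n:ℝ) < 2 := by linarith
      norm_cast at h3 h4
      omega
  have hhand : ∑ v, (A v).card = 2 * Fintype.card {e // Fr e} := by
    simp only [A, Finset.card_filter]
    rw [Finset.sum_comm]
    have : ∀ e, (∑ v, if Fr e ∧ v ∈ G.ends e then 1 else 0) = if Fr e then 2 else 0 := by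
      intro e
      by_cases hF : Fr e
      · simp only [hF, true_and, if_true]
        have h := hloop e
        rw [← Finset.card_filter]
        induction hz : G.ends e with
        | _ a b =>
          rw [hz] at h
          have hab : a ≠ b := by simpa using h
          rw [← Finset.card_pair hab]
          congr 1
          ext v; simp
      · simp [hF]
    rw [Finset.sum_congr rfl fun e _ => this e, Fintype.card_subtype, Finset.card_filter,
      Finset.mul_sum]
    apply Finset.sum_congr rfl
    intro e _; split_ifs <;> rfl
  have hdegeq : ∀ v, (if T v then 2 else 0) = (A v).card := by
    have hle : ∀ v ∈ (Finset.univ : Finset V), (if T v then 2 else 0) ≤ (A v).card := by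
      intro v _
      split_ifs with h
      · exact hdeg v h
      · omega
    have hsumT : ∑ v, (if T v then 2 else 0) = 2 * Fintype.card {v // T v} := by
      rw [Fintype.card_subtype, Finset.card_filter, Finset.mul_sum]
      apply Finset.sum_congr rfl
      intro e _; split_ifs <;> rfl
    have heq : ∑ v, (if T v then 2 else 0) = ∑ v, (A v).card :=
      le_antisymm (Finset.sum_le_sum hle) (by rw [hhand, hsumT]; omega)
    intro v
    exact (Finset.sum_eq_sum_iff_of_le hle).mp heq v (Finset.mem_univ v)
  have hFhalf : ∀ e, Fr e → f e = 1/2 := by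
    have hz := hkill (fun e => if Fr e then f e - 1/2 else 0) (fun e he => by simp [he]) (by
      intro v hTv
      have h2 : (A v).card = 2 := by rw [← hdegeq v, if_pos hTv]
      obtain ⟨a, b, hab, hA⟩ := Finset.card_eq_two.mp h2
      have hFa : Fr a := by
        have : a ∈ A v := by rw [hA]; simp
        simp only [A, Finset.mem_filter] at this
        exact this.2.1
      have hFb : Fr b := by
        have : b ∈ A v := by rw [hA]; simp
        simp only [A, Finset.mem_filter] at this
        exact this.2.1
      obtain ⟨n, hn⟩ := hdec v
      simp only [L]
      have hs : dsum G (fun e => if Fr e then f e - 1/2 else 0) v = (f a - 1/2) + (f b - 1/2) := by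
        rw [hdsupp _ (fun e he => by simp [he]), hA, Finset.sum_pair hab, if_pos hFa, if_pos hFb]
      rw [hs]
      rw [hA, Finset.sum_pair hab] at hn
      have a1 := hFa.1
      have a2 := hFa.2
      have b1 := hFb.1
      have b2 := hFb.2
      by_cases hC : C1 v
      · rw [dif_pos hC]
        obtain ⟨h3, h4⟩ := hC.choose_spec
        set e0 := hC.choose
        rw [hA] at h3
        simp only [Finset.mem_insert, Finset.mem_singleton] at h3
        have h5 : (n:ℝ) < 1 := by rcases h3 with h3 | h3 <;> rw [h3] at h4 <;> linarith
        have h6 : n = 0 := by norm_cast at h5; omega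
        rw [h6] at hn
        push_cast at hn
        rcases h3 with h3 | h3
        · rw [h3] at h4 ⊢; rw [if_pos hFa]; linarith
        · rw [h3] at h4 ⊢; rw [if_pos hFb]; linarith
      · rw [dif_neg hC]
        have hS : dsum G f v = 2 := by
          rcases hTv.2.2 with h | h
          · exact absurd h hC
          · exact h
        have h5 : (n:ℝ) < 2 := by linarith
        have h6 : (0:ℝ) < n := by linarith
        have h7 : n = 1 := by norm_cast at h5 h6; omega
        rw [h7] at hn
        push_cast at hn
        linarith)
    intro e he
    have := congrFun hz e
    simp only [he, if_true, Pi.zero_apply] at this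
    linarith
  have hmemA : ∀ v e, (v ∈ G.ends e ∧ f e = 1/2) ↔ e ∈ A v := by
    intro v e
    simp only [A, Finset.mem_filter, Finset.mem_univ, true_and]
    constructor
    · rintro ⟨h1, h2⟩
      exact ⟨⟨by rw [h2]; norm_num, by rw [h2]; norm_num⟩, h1⟩
    · rintro ⟨h1, h2⟩
      exact ⟨h2, hFhalf e h1⟩
  have hcase : ∀ v, ¬ T v → ∀ e, v ∈ G.ends e → f e ≠ 1/2 := by
    intro v hT e he hh
    have h1 := (hmemA v e).mp ⟨he, hh⟩
    have h2 := hdegeq v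
    rw [if_neg hT] at h2
    rw [Finset.card_eq_zero.mp h2.symm] at h1
    simp at h1
  refine ⟨f, hfP, hge, ?_, ?_, ?_⟩
  · intro e
    by_cases hF : Fr e
    · exact Or.inr (Or.inl (hFhalf e hF))
    · rcases hnF e hF with h | h
      · exact Or.inl h
      · exact Or.inr (Or.inr h)
  · exact hcase s fun h => h.1 rfl
  · intro v hv
    by_cases hT : T v
    · right
      have h2 : (A v).card = 2 := by rw [← hdegeq v, if_pos hT]
      obtain ⟨a, b, hab, hA⟩ := Finset.card_eq_two.mp h2
      refine ⟨a, b, hab, fun e => ?_⟩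
      rw [hmemA, hA]; simp
    · exact Or.inl (hcase v hT)

end Multigraph

namespace Multigraph

variable {V E : Type}

/-- A system of flags with the two involutions used to trace walks. -/
structure FlagSys (G : Multigraph V E) (s : V) (D : Type) where
  vt : D → V
  ed : D → E
  al : D → D
  be : D → D
  al_al : ∀ d, al (al d) = d
  be_be : ∀ d, be (be d) = d
  ed_al : ∀ d, ed (al d) = ed d
  vt_be : ∀ d, vt (be d) = vt d
  ends_ed : ∀ d, G.ends (ed d) = s(vt d, vt (al d))
  ed_be : ∀ d, vt d ≠ s → ed (be d) ≠ ed d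

namespace FlagSys

variable {G : Multigraph V E} {s : V} {D : Type}

/-- The tracing permutation. -/
def pi (Φ : FlagSys G s D) : Equiv.Perm D where
  toFun d := Φ.be (Φ.al d)
  invFun d := Φ.al (Φ.be d)
  left_inv d := by simp [Φ.be_be, Φ.al_al]
  right_inv d := by simp [Φ.be_be, Φ.al_al]

/-- The `i`th flag of the trace starting at `c`. -/
def tr (Φ : FlagSys G s D) (c : D) (i : ℕ) : D := (Φ.pi ^ i) c

lemma tr_zero (Φ : FlagSys G s D) (c : D) : Φ.tr c 0 = c := rfl

lemma tr_succ (Φ : FlagSys G s D) (c : D) (i : ℕ) : Φ.tr c (i+1) = Φ.be (Φ.al (Φ.tr c i)) := by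
  unfold tr; rw [pow_succ']; rfl

lemma be_tr_succ (Φ : FlagSys G s D) (c : D) (i : ℕ) : Φ.be (Φ.tr c (i+1)) = Φ.al (Φ.tr c i) := by
  rw [tr_succ, Φ.be_be]

lemma vt_tr_succ (Φ : FlagSys G s D) (c : D) (i : ℕ) :
    Φ.vt (Φ.tr c (i+1)) = Φ.vt (Φ.al (Φ.tr c i)) := by
  rw [tr_succ, Φ.vt_be]

lemma tr_tr (Φ : FlagSys G s D) (c : D) (i j : ℕ) : Φ.tr (Φ.tr c i) j = Φ.tr c (j + i) := by
  unfold tr; rw [pow_add]; rfl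

lemma tr_inj (Φ : FlagSys G s D) (c c' : D) (i j : ℕ) (h : Φ.tr c (j + i) = Φ.tr c' i) :
    Φ.tr c j = c' := by
  unfold tr at *
  rw [add_comm, pow_add] at h
  exact (Φ.pi ^ i).injective h

lemma exists_return [Finite D] (Φ : FlagSys G s D) (c : D) (hc : Φ.vt c = s) :
    ∃ n, Φ.vt (Φ.tr c (n+1)) = s := by
  have h1 : 0 < orderOf Φ.pi := orderOf_pos _
  refine ⟨orderOf Φ.pi - 1, ?_⟩
  rw [show orderOf Φ.pi - 1 + 1 = orderOf Φ.pi by omega]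
  unfold tr
  rw [pow_orderOf_eq_one]
  exact hc

open Classical in
/-- Return time. -/
noncomputable def ret [Finite D] (Φ : FlagSys G s D) (c : D) : ℕ :=
  if hc : Φ.vt c = s then Nat.find (Φ.exists_return c hc) else 0

lemma ret_spec [Finite D] (Φ : FlagSys G s D) (c : D) (hc : Φ.vt c = s) :
    Φ.vt (Φ.tr c (Φ.ret c + 1)) = s := by
  classical
  unfold ret
  rw [dif_pos hc]
  exact Nat.find_spec (Φ.exists_return c hc)

lemma ret_min [Finite D] (Φ : FlagSys G s D) (c : D) (hc : Φ.vt c = s) (i : ℕ) (h0 : 0 < i)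
    (hi : i ≤ Φ.ret c) : Φ.vt (Φ.tr c i) ≠ s := by
  classical
  unfold ret at hi
  rw [dif_pos hc] at hi
  have := Nat.find_min (Φ.exists_return c hc) (m := i - 1) (by omega)
  rwa [show i - 1 + 1 = i by omega] at this

lemma ret_eq [Finite D] (Φ : FlagSys G s D) (c : D) (hc : Φ.vt c = s) (n : ℕ)
    (h1 : Φ.vt (Φ.tr c (n + 1)) = s) (h2 : ∀ i, 0 < i → i ≤ n → Φ.vt (Φ.tr c i) ≠ s) :
    Φ.ret c = n := by
  rcases Nat.lt_trichotomy (Φ.ret c) n with h | h | h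
  · exact absurd (Φ.ret_spec c hc) (h2 _ (by omega) (by omega))
  · exact h
  · exact absurd h1 (Φ.ret_min c hc _ (by omega) (by omega))

/-- The last flag, reversed. -/
noncomputable def rev [Finite D] (Φ : FlagSys G s D) (c : D) : D := Φ.al (Φ.tr c (Φ.ret c))

lemma vt_rev [Finite D] (Φ : FlagSys G s D) (c : D) (hc : Φ.vt c = s) : Φ.vt (Φ.rev c) = s := by
  unfold rev; rw [← vt_tr_succ]; exact Φ.ret_spec c hc

lemma tr_rev [Finite D] (Φ : FlagSys G s D) (c : D) (i : ℕ) (hi : i ≤ Φ.ret c) :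
    Φ.tr (Φ.rev c) i = Φ.al (Φ.tr c (Φ.ret c - i)) := by
  induction i with
  | zero => rfl
  | succ i ih =>
    rw [tr_succ, ih (by omega), Φ.al_al,
      show Φ.ret c - i = (Φ.ret c - (i+1)) + 1 by omega, be_tr_succ]

lemma ret_rev [Finite D] (Φ : FlagSys G s D) (c : D) (hc : Φ.vt c = s) :
    Φ.ret (Φ.rev c) = Φ.ret c := by
  apply Φ.ret_eq _ (Φ.vt_rev c hc)
  · rw [vt_tr_succ, tr_rev _ _ _ le_rfl, Φ.al_al, Nat.sub_self]; exact hc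
  · intro i h0 hi
    rw [tr_rev _ _ _ hi, ← vt_tr_succ]
    exact Φ.ret_min c hc _ (by omega) (by omega)

lemma rev_rev [Finite D] (Φ : FlagSys G s D) (c : D) (hc : Φ.vt c = s) :
    Φ.rev (Φ.rev c) = c := by
  change Φ.al (Φ.tr (Φ.rev c) (Φ.ret (Φ.rev c))) = c
  rw [ret_rev Φ c hc, tr_rev _ _ _ le_rfl, Φ.al_al, Nat.sub_self]; rfl

lemma al_ne (Φ : FlagSys G s D) (hloop : G.LoopFree) (d : D) : Φ.vt (Φ.al d) ≠ Φ.vt d := by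
  intro h
  apply hloop (Φ.ed d)
  rw [Φ.ends_ed, h]; simp

lemma rev_ne [Finite D] (Φ : FlagSys G s D) (hloop : G.LoopFree) (c : D) (hc : Φ.vt c = s) :
    Φ.rev c ≠ c := by
  intro h
  have h1 : ∀ i ≤ Φ.ret c, Φ.tr c i = Φ.al (Φ.tr c (Φ.ret c - i)) := by
    intro i hi
    have := Φ.tr_rev c i hi
    rwa [h] at this
  rcases Nat.even_or_odd' (Φ.ret c) with ⟨k, hk | hk⟩
  · have h2 := h1 k (by omega)
    rw [show Φ.ret c - k = k by omega] at h2
    exact Φ.al_ne hloop (Φ.tr c k) (by rw [← h2])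
  · have h2 := h1 (k+1) (by omega)
    rw [show Φ.ret c - (k+1) = k by omega] at h2
    have h3 := Φ.be_tr_succ c k
    rw [← h2] at h3
    exact Φ.ed_be _ (Φ.ret_min c hc (k+1) (by omega) (by omega)) (by rw [h3])

lemma tr_eq_tr [Finite D] (Φ : FlagSys G s D) (c c' : D) (hc : Φ.vt c = s) (hc' : Φ.vt c' = s)
    (i j : ℕ) (hi : i ≤ Φ.ret c) (hj : j ≤ Φ.ret c') (h : Φ.tr c i = Φ.tr c' j) :
    c = c' ∧ i = j := by
  rcases Nat.lt_trichotomy i j with hij | hij | hij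
  · have h2 := Φ.tr_inj c' c i (j - i) (by rw [show j - i + i = j by omega, h])
    exact absurd (h2 ▸ hc) (Φ.ret_min c' hc' (j - i) (by omega) (by omega))
  · subst hij
    have h2 := Φ.tr_inj c c' i 0 (by rw [zero_add]; exact h)
    exact ⟨h2, rfl⟩
  · have h2 := Φ.tr_inj c c' j (i - j) (by rw [show i - j + j = i by omega, h])
    exact absurd (h2 ▸ hc') (Φ.ret_min c hc (i - j) (by omega) (by omega))

lemma tr_eq_al_tr [Finite D] (Φ : FlagSys G s D) (c c' : D) (hc : Φ.vt c = s) (hc' : Φ.vt c' = s)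
    (i j : ℕ) (hi : i ≤ Φ.ret c) (hj : j ≤ Φ.ret c') (h : Φ.tr c i = Φ.al (Φ.tr c' j)) :
    c = Φ.rev c' := by
  have h1 := Φ.tr_rev c' (Φ.ret c' - j) (by omega)
  rw [show Φ.ret c' - (Φ.ret c' - j) = j by omega, ← h] at h1
  exact (Φ.tr_eq_tr c (Φ.rev c') hc (Φ.vt_rev c' hc') i (Φ.ret c' - j) hi
    (by rw [Φ.ret_rev c' hc']; omega) h1.symm).1

/-- The walk traced from `c`. -/
noncomputable def walk [Finite D] (Φ : FlagSys G s D) (c : D) : G.Walk where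
  len := Φ.ret c + 1
  len_pos := by omega
  verts i := Φ.vt (Φ.tr c i)
  edges i := Φ.ed (Φ.tr c i)
  valid i := by
    rw [Φ.ends_ed, Fin.val_succ, vt_tr_succ]; rfl

lemma card_le_two_of_disjoint {D ι : Type*} [DecidableEq D] (I : Finset ι) (g h : ι → D)
    (X : Finset D) (k : ℕ) (hk : X.card ≤ 2 * k)
    (hg : ∀ i ∈ I, g i ∈ X) (hh : ∀ i ∈ I, h i ∈ X)
    (ginj : ∀ i ∈ I, ∀ j ∈ I, g i = g j → i = j) (hinj : ∀ i ∈ I, ∀ j ∈ I, h i = h j → i = j)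
    (hdis : ∀ i ∈ I, ∀ j ∈ I, g i ≠ h j) : I.card ≤ k := by
  have h1 : (I.image g).card = I.card := Finset.card_image_of_injOn fun i hi j hj => ginj i hi j hj
  have h2 : (I.image h).card = I.card := Finset.card_image_of_injOn fun i hi j hj => hinj i hi j hj
  have h3 : Disjoint (I.image g) (I.image h) := by
    rw [Finset.disjoint_left]
    intro a ha hb
    obtain ⟨i, hi, rfl⟩ := Finset.mem_image.mp ha
    obtain ⟨j, hj, hij⟩ := Finset.mem_image.mp hb
    exact hdis i hi j hj hij.symm
  have h4 : (I.image g ∪ I.image h).card ≤ X.card := by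
    apply Finset.card_le_card
    apply Finset.union_subset
    · intro a ha
      obtain ⟨i, hi, rfl⟩ := Finset.mem_image.mp ha
      exact hg i hi
    · intro a ha
      obtain ⟨i, hi, rfl⟩ := Finset.mem_image.mp ha
      exact hh i hi
  rw [Finset.card_union_of_disjoint h3] at h4
  omega

lemma al_inj (Φ : FlagSys G s D) (d d' : D) (h : Φ.al d = Φ.al d') : d = d' := by
  rw [← Φ.al_al d, h, Φ.al_al]

lemma be_inj (Φ : FlagSys G s D) (d d' : D) (h : Φ.be d = Φ.be d') : d = d' := by
  rw [← Φ.be_be d, h, Φ.be_be]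

open Classical in
lemma walk_isSCycle [Fintype D] (Φ : FlagSys G s D) (hloop : G.LoopFree)
    (h4 : ∀ e, (Finset.univ.filter fun d => Φ.ed d = e).card ≤ 4) (c : D) (hc : Φ.vt c = s) :
    (Φ.walk c).IsSCycle s := by
  refine ⟨hc, Φ.ret_spec c hc, ?_, ?_, ?_⟩
  · intro i h0 h1
    apply Φ.ret_min c hc
    · rw [Nat.pos_iff_ne_zero]; intro h; exact h0 (Fin.ext h)
    · have h2 : (i : ℕ) < Φ.ret c + 1 + 1 := i.2
      have h3 : (i : ℕ) ≠ Φ.ret c + 1 := fun h => h1 (Fin.ext h)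
      omega
  · intro i j hij
    show Φ.ed (Φ.tr c i) ≠ Φ.ed (Φ.tr c j)
    rw [← hij, tr_succ, ← Φ.ed_al (Φ.tr c i)]
    apply (Φ.ed_be _ _).symm
    rw [← vt_tr_succ]
    apply Φ.ret_min c hc _ (by omega)
    have : (j : ℕ) < Φ.ret c + 1 := j.2
    omega
  · intro e
    have hlt : ∀ i : Fin (Φ.ret c + 1), (i:ℕ) ≤ Φ.ret c := fun i => by omega
    show Nat.card {i : Fin (Φ.ret c + 1) // Φ.ed (Φ.tr c i) = e} ≤ 2
    rw [Nat.card_eq_fintype_card, Fintype.card_subtype]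
    apply card_le_two_of_disjoint _ (fun i : Fin (Φ.ret c + 1) => Φ.tr c i)
      (fun i : Fin (Φ.ret c + 1) => Φ.al (Φ.tr c i)) _ 2 (h4 e)
    · intro i hi; simpa using hi
    · intro i hi; simpa [Φ.ed_al] using hi
    · intro i _ j _ h
      exact Fin.ext (Φ.tr_eq_tr c c hc hc i j (hlt i) (hlt j) h).2
    · intro i _ j _ h
      exact Fin.ext (Φ.tr_eq_tr c c hc hc i j (hlt i) (hlt j) (Φ.al_inj _ _ h)).2
    · intro i _ j _ h
      exact Φ.rev_ne hloop c hc (Φ.tr_eq_al_tr c c hc hc i j (hlt i) (hlt j) h).symm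

open Classical in
lemma walk_vertCount [Fintype D] (Φ : FlagSys G s D) (c : D) (hc : Φ.vt c = s) (v : V)
    (hv : v ≠ s) : (Φ.walk c).vertCount v =
      ((Finset.range (Φ.ret c)).filter fun i => Φ.vt (Φ.tr c (i+1)) = v).card := by
  have h1 : ∀ i ≤ Φ.ret c + 1, (Φ.walk c).vv i = Φ.vt (Φ.tr c i) := by
    intro i hi
    show Φ.vt (Φ.tr c (min i (Φ.ret c + 1))) = _
    rw [min_eq_left hi]
  rw [Walk.vertCount_eq]
  show ((Finset.range (Φ.ret c + 1 + 1)).filter fun i => (Φ.walk c).vv i = v).card = _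
  rw [Finset.filter_congr (q := fun i => Φ.vt (Φ.tr c i) = v)
    (fun i hi => by rw [h1 i (by simp at hi; omega)])]
  rw [Finset.range_add_one, Finset.filter_insert, if_neg (by rw [Φ.ret_spec c hc]; exact hv.symm)]
  rw [Finset.card_filter, Finset.sum_range_succ', ← Finset.card_filter, tr_zero,
    if_neg (by rw [hc]; exact hv.symm), add_zero]

open Classical in
/-- Half-integral packing from a flag system. -/
lemma exists_packing [Fintype D] (Φ : FlagSys G s D) (hloop : G.LoopFree)
    (h4 : ∀ e, (Finset.univ.filter fun d => Φ.ed d = e).card ≤ 4)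
    (h4v : ∀ v, v ≠ s → (Finset.univ.filter fun d => Φ.vt d = v).card ≤ 4) :
    ∃ y : G.Walk →₀ ℝ, G.IsSCyclePacking s y ∧ (∀ W, y W = 0 ∨ y W = 1/2 ∨ y W = 1) ∧
      packingSize y = ((Finset.univ.filter fun d => Φ.vt d = s).card : ℝ) / 4 := by
  let r := Fintype.equivFin D
  let S := Finset.univ.filter fun d => Φ.vt d = s
  let S' := S.filter fun c => r c < r (Φ.rev c)
  have hS : ∀ c, c ∈ S ↔ Φ.vt c = s := by intro c; simp [S]
  have hS' : ∀ c, c ∈ S' ↔ Φ.vt c = s ∧ r c < r (Φ.rev c) := by intro c; simp [S', S]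
  have hcard : S.card = 2 * S'.card := by
    have h1 := Finset.card_filter_add_card_filter_not (s := S) (fun c => r c < r (Φ.rev c))
    have h2 : (S.filter fun c => ¬ r c < r (Φ.rev c)).card = S'.card := by
      symm
      apply Finset.card_bij (fun c _ => Φ.rev c)
      · intro c hc
        rw [hS'] at hc
        rw [Finset.mem_filter, hS, Φ.rev_rev c hc.1]
        exact ⟨Φ.vt_rev c hc.1, not_lt.mpr hc.2.le⟩
      · intro c hc c' hc' h
        rw [hS'] at hc hc'
        rw [← Φ.rev_rev c hc.1, h, Φ.rev_rev c' hc'.1]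
      · intro c hc
        rw [Finset.mem_filter, hS] at hc
        refine ⟨Φ.rev c, ?_, Φ.rev_rev c hc.1⟩
        rw [hS', Φ.rev_rev c hc.1]
        refine ⟨Φ.vt_rev c hc.1, lt_of_le_of_ne (not_lt.mp hc.2) ?_⟩
        intro h
        exact Φ.rev_ne hloop c hc.1 (r.injective h)
    rw [h2] at h1
    change S'.card + S'.card = S.card at h1
    omega
  have hnot : ∀ c ∈ S', ∀ c' ∈ S', c ≠ Φ.rev c' := by
    intro c hc c' hc' h
    rw [hS'] at hc hc'
    have h1 := hc.2
    rw [h, Φ.rev_rev c' hc'.1] at h1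
    exact lt_asymm h1 hc'.2
  let y : G.Walk →₀ ℝ := ∑ c ∈ S', Finsupp.single (Φ.walk c) (1/2 : ℝ)
  have hy : ∀ W, y W = ((S'.filter fun c => Φ.walk c = W).card : ℝ) * (1/2) := by
    intro W
    simp only [y, Finsupp.finsetSum_apply, Finsupp.single_apply]
    rw [← Finset.sum_filter, Finset.sum_const, nsmul_eq_mul]
  have hsum : ∀ g : G.Walk → ℝ, ∑ W ∈ y.support, g W * y W = ∑ c ∈ S', g (Φ.walk c) * (1/2) := by
    intro g
    change y.sum (fun W a => g W * a) = _
    simp only [y]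
    rw [← Finsupp.sum_finsetSum_index (by simp) (by intro a b c; ring)]
    apply Finset.sum_congr rfl
    intro c _
    rw [Finsupp.sum_single_index (by simp)]
  refine ⟨y, ⟨?_, ?_, ?_⟩, ?_, ?_⟩
  · intro W; rw [hy]; positivity
  · intro W hW
    rw [hy] at hW
    have : (S'.filter fun c => Φ.walk c = W).Nonempty := by
      by_contra hc
      rw [Finset.not_nonempty_iff_eq_empty] at hc
      rw [hc] at hW; simp at hW
    obtain ⟨c, hc⟩ := this
    rw [Finset.mem_filter, hS'] at hc
    rw [← hc.2]
    exact Φ.walk_isSCycle hloop h4 c hc.1.1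
  · intro v hv
    rw [hsum]
    rw [← Finset.sum_mul]
    have key : ∑ c ∈ S', (Φ.walk c).vertCount v ≤ 2 := by
      rw [Finset.sum_congr rfl fun c hc => Φ.walk_vertCount c ((hS' c).mp hc).1 v hv]
      rw [← Finset.card_sigma]
      have hm : ∀ p : Σ _ : D, ℕ, p ∈ (S'.sigma fun c => (Finset.range (Φ.ret c)).filter
          fun i => Φ.vt (Φ.tr c (i+1)) = v) →
          p.1 ∈ S' ∧ Φ.vt p.1 = s ∧ p.2 < Φ.ret p.1 ∧ Φ.vt (Φ.tr p.1 (p.2+1)) = v := by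
        intro p hp
        obtain ⟨a, b⟩ := Finset.mem_sigma.mp hp
        rw [Finset.mem_filter, Finset.mem_range] at b
        exact ⟨a, ((hS' _).mp a).1, b⟩
      have hinj : ∀ p ∈ (S'.sigma fun c => (Finset.range (Φ.ret c)).filter
          fun i => Φ.vt (Φ.tr c (i+1)) = v), ∀ q ∈ (S'.sigma fun c => (Finset.range (Φ.ret c)).filter
          fun i => Φ.vt (Φ.tr c (i+1)) = v), Φ.tr p.1 (p.2+1) = Φ.tr q.1 (q.2+1) → p = q := by
        rintro ⟨c, i⟩ hp ⟨c', j⟩ hq h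
        obtain ⟨p1, p2, p3, p4⟩ := hm _ hp
        obtain ⟨q1, q2, q3, q4⟩ := hm _ hq
        obtain ⟨h1, h2⟩ := Φ.tr_eq_tr c c' p2 q2 (i+1) (j+1) p3 q3 h
        subst h1
        have : i = j := by omega
        rw [this]
      apply card_le_two_of_disjoint _ (fun p : Σ _ : D, ℕ => Φ.tr p.1 (p.2+1))
        (fun p : Σ _ : D, ℕ => Φ.be (Φ.tr p.1 (p.2+1))) _ 2 (h4v v hv)
      · intro p hp; simpa using (hm p hp).2.2.2
      · intro p hp; simpa [Φ.vt_be] using (hm p hp).2.2.2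
      · exact hinj
      · intro p hp q hq h
        exact hinj p hp q hq (Φ.be_inj _ _ h)
      · intro p hp q hq h
        rw [Φ.be_tr_succ] at h
        obtain ⟨p1, p2, p3, p4⟩ := hm _ hp
        obtain ⟨q1, q2, q3, q4⟩ := hm _ hq
        exact hnot _ p1 _ q1 (Φ.tr_eq_al_tr p.1 q.1 p2 q2 (p.2+1) q.2 p3 q3.le h)
    have key2 : ∑ c ∈ S', ((Φ.walk c).vertCount v : ℝ) ≤ 2 := by exact_mod_cast key
    linarith
  · intro W
    have : (S'.filter fun c => Φ.walk c = W).card ≤ 2 := by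
      by_cases hne : (S'.filter fun c => Φ.walk c = W).Nonempty
      · obtain ⟨c₀, hc₀⟩ := hne
        rw [Finset.mem_filter, hS'] at hc₀
        have hed : ∀ c, Φ.walk c = W → Φ.ed c = W.ee 0 := by
          intro c hc; rw [← hc]; rfl
        apply card_le_two_of_disjoint _ (fun c : D => c) (fun c => Φ.al c) _ 2 (h4 (W.ee 0))
        · intro c hc
          rw [Finset.mem_filter] at hc
          simpa using hed c hc.2
        · intro c hc
          rw [Finset.mem_filter] at hc
          simpa [Φ.ed_al] using hed c hc.2
        · intro c _ c' _ h; exact h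
        · intro c _ c' _ h; exact Φ.al_inj _ _ h
        · intro c hc c' hc' h
          rw [Finset.mem_filter, hS'] at hc hc'
          apply Φ.al_ne hloop c'
          rw [← h, hc.1.1, hc'.1.1]
      · rw [Finset.not_nonempty_iff_eq_empty.mp hne]; simp
    rw [hy]
    interval_cases (S'.filter fun c => Φ.walk c = W).card <;> simp
  · have := hsum (fun _ => 1)
    simp only [one_mul] at this
    unfold packingSize
    rw [this, Finset.sum_const, nsmul_eq_mul]
    change _ = (S.card : ℝ) / 4
    rw [hcard]; push_cast; ring

end FlagSys

end Multigraph

namespace Multigraph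

variable {V E : Type}

lemma sum_le_dsum [Fintype E] (G : Multigraph V E) (f : E → ℝ) (hf : ∀ e, 0 ≤ f e) (v : V)
    (T : Finset E) (hT : ∀ e ∈ T, v ∈ G.ends e) : ∑ e ∈ T, f e ≤ dsum G f v := by
  classical
  unfold dsum
  calc ∑ e ∈ T, f e = ∑ e ∈ T, if v ∈ G.ends e then f e else 0 :=
        Finset.sum_congr rfl fun e he => by rw [if_pos (hT e he)]
    _ ≤ _ := Finset.sum_le_sum_of_subset_of_nonneg (Finset.subset_univ _) (by
        intro e _ _
        split_ifs
        · exact hf e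
        · exact le_rfl)

/-- Active edge copies. -/
def Act (f : E → ℝ) (p : E × Bool) : Prop := f p.1 = 1 ∨ (f p.1 = 1/2 ∧ p.2 = false)

lemma exists_invol [Fintype E] (G : Multigraph V E) (s : V) (f : E → ℝ) (hf : InP G s f)
    (h01 : ∀ e, f e = 0 ∨ f e = 1/2 ∨ f e = 1) (v : V) (hv : v ≠ s)
    (hh : (∀ e, v ∈ G.ends e → f e ≠ 1/2) ∨
      ∃ e₁ e₂, e₁ ≠ e₂ ∧ ∀ e, (v ∈ G.ends e ∧ f e = 1/2) ↔ (e = e₁ ∨ e = e₂)) :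
    ∃ b : E × Bool → E × Bool, ∀ p, v ∈ G.ends p.1 → Act f p →
      v ∈ G.ends (b p).1 ∧ Act f (b p) ∧ b (b p) = p ∧ (b p).1 ≠ p.1 := by
  classical
  obtain ⟨hf0, hf2, hfe⟩ := hf
  by_cases hone : ∃ a, v ∈ G.ends a ∧ f a = 1
  · obtain ⟨a, hav, ha⟩ := hone
    rcases hh with hh | ⟨h₁, h₂, hne, hh⟩
    · -- two edges of value one
      have hex : ∃ c, c ≠ a ∧ v ∈ G.ends c ∧ f c = 1 := by
        by_contra hcon
        push Not at hcon
        have h1 := hfe v hv a hav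
        have h2 : dsum G f v = f a := by
          unfold dsum
          rw [Finset.sum_eq_single a]
          · rw [if_pos hav]
          · intro e _ hea
            split_ifs with hev
            · rcases h01 e with h | h | h
              · exact h
              · exact absurd h (hh e hev)
              · exact absurd h (hcon e hea hev)
            · rfl
          · simp
        rw [h2, ha] at h1
        norm_num at h1
      obtain ⟨c, hca, hcv, hc⟩ := hex
      have huniq : ∀ e, v ∈ G.ends e → f e = 1 → e = a ∨ e = c := by
        intro e hev he
        by_contra hcon
        push Not at hcon
        have h1 := sum_le_dsum G f hf0 v {e, a, c} (by
          intro x hx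
          simp only [Finset.mem_insert, Finset.mem_singleton] at hx
          rcases hx with rfl | rfl | rfl <;> assumption)
        rw [Finset.sum_insert (by simp [hcon.1, hcon.2]), Finset.sum_pair hca.symm, he, ha, hc] at h1
        linarith [hf2 v hv]
      have hact : ∀ e t, v ∈ G.ends e → Act f (e, t) → e = a ∨ e = c := by
        rintro e t hev (h | h)
        · exact huniq e hev h
        · exact absurd h.1 (hh e hev)
      refine ⟨fun p => (if p.1 = a then c else a, p.2), ?_⟩
      rintro ⟨e, t⟩ hev hA
      rcases hact e t hev hA with rfl | rfl
      · simp [Act, hc, hcv, hca]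
      · simp [Act, ha, hav, hca, hca.symm]
    · -- two halves and a one
      have m1 := (hh h₁).mpr (Or.inl rfl)
      have m2 := (hh h₂).mpr (Or.inr rfl)
      have ha1 : a ≠ h₁ := by
        rintro rfl; linarith [m1.2]
      have ha2 : a ≠ h₂ := by
        rintro rfl; linarith [m2.2]
      have huniq : ∀ e, v ∈ G.ends e → f e = 1 → e = a := by
        intro e hev he
        by_contra hcon
        have he1 : e ≠ h₁ := by
          rintro rfl; linarith [m1.2]
        have he2 : e ≠ h₂ := by
          rintro rfl; linarith [m2.2]
        have h1 := sum_le_dsum G f hf0 v {e, a, h₁, h₂} (by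
          intro x hx
          simp only [Finset.mem_insert, Finset.mem_singleton] at hx
          rcases hx with rfl | rfl | rfl | rfl
          · exact hev
          · exact hav
          · exact m1.1
          · exact m2.1)
        rw [Finset.sum_insert (by simp [hcon, he1, he2]), Finset.sum_insert (by simp [ha1, ha2]),
          Finset.sum_pair hne, he, ha, m1.2, m2.2] at h1
        linarith [hf2 v hv]
      have hact : ∀ e t, v ∈ G.ends e → Act f (e, t) →
          (e, t) = (a, false) ∨ (e, t) = (a, true) ∨ (e, t) = (h₁, false) ∨ (e, t) = (h₂, false) := by
        rintro e t hev (h | ⟨h, rfl⟩)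
        · have := huniq e hev h
          subst this
          cases t <;> simp
        · rcases (hh e).mp ⟨hev, h⟩ with rfl | rfl <;> simp
      refine ⟨fun p => if p = (a, false) then (h₁, false) else if p = (a, true) then (h₂, false)
        else if p = (h₁, false) then (a, false) else (a, true), ?_⟩
      rintro ⟨e, t⟩ hev hA
      rcases hact e t hev hA with h | h | h | h
      · rw [h]; simp [Act, m1, ha1.symm]
      · rw [h]; simp [Act, m2, ha2.symm, hne.symm]
      · rw [h]; simp [Act, ha, hav, ha1, ha1.symm]
      · rw [h]; simp [Act, ha, hav, ha2, ha2.symm, hne.symm]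
  · push Not at hone
    rcases hh with hh | ⟨h₁, h₂, hne, hh⟩
    · refine ⟨id, ?_⟩
      rintro ⟨e, t⟩ hev (h | h)
      · exact absurd h (hone e hev)
      · exact absurd h.1 (hh e hev)
    · have m1 := (hh h₁).mpr (Or.inl rfl)
      have m2 := (hh h₂).mpr (Or.inr rfl)
      refine ⟨fun p => (if p.1 = h₁ then h₂ else h₁, p.2), ?_⟩
      rintro ⟨e, t⟩ hev (h | ⟨h, ht⟩)
      · exact absurd h (hone e hev)
      · simp only at ht
        subst ht
        rcases (hh e).mp ⟨hev, h⟩ with rfl | rfl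
        · simp [Act, m2, hne.symm]
        · simp [Act, m1, hne, hne.symm]

/-- Flags of active copies. -/
abbrev Flag (G : Multigraph V E) (f : E → ℝ) : Type :=
  {q : (E × Bool) × V // Act f q.1 ∧ q.2 ∈ G.ends q.1.1}

open Classical in
/-- The flag system obtained from vertex involutions. -/
noncomputable def mkFlagSys (G : Multigraph V E) (s : V) (f : E → ℝ)
    (b : V → E × Bool → E × Bool)
    (hb : ∀ v, v ≠ s → ∀ p, v ∈ G.ends p.1 → Act f p →
      v ∈ G.ends (b v p).1 ∧ Act f (b v p) ∧ b v (b v p) = p ∧ (b v p).1 ≠ p.1) :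
    FlagSys G s (Flag G f) where
  vt d := d.1.2
  ed d := d.1.1.1
  al d := ⟨(d.1.1, Sym2.Mem.other d.2.2), d.2.1, Sym2.other_mem _⟩
  be d := if h : d.1.2 = s then d else
    ⟨(b d.1.2 d.1.1, d.1.2), (hb _ h _ d.2.2 d.2.1).2.1, (hb _ h _ d.2.2 d.2.1).1⟩
  al_al := by
    rintro ⟨⟨p, v⟩, h1, h2⟩
    apply Subtype.ext
    simp only [Prod.mk.injEq, true_and]
    exact Sym2.other_invol h2 _
  be_be := by
    rintro ⟨⟨p, v⟩, h1, h2⟩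
    by_cases h : v = s
    · simp [h]
    · apply Subtype.ext
      simp [h, (hb v h p h2 h1).2.2.1]
  ed_al d := rfl
  vt_be := by
    intro d
    split_ifs <;> rfl
  ends_ed d := (Sym2.other_spec d.2.2).symm
  ed_be := by
    intro d hd
    rw [dif_neg hd]
    exact (hb _ hd _ d.2.2 d.2.1).2.2.2

open Classical in
lemma card_flag [Fintype V] [Fintype E] (G : Multigraph V E) (f : E → ℝ)
    (h01 : ∀ e, f e = 0 ∨ f e = 1/2 ∨ f e = 1) (v : V) :
    ((Finset.univ.filter fun d : Flag G f => d.1.2 = v).card : ℝ) = 2 * dsum G f v := by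
  have h1 : (Finset.univ.filter fun d : Flag G f => d.1.2 = v).card =
      (Finset.univ.filter fun p : E × Bool => Act f p ∧ v ∈ G.ends p.1).card := by
    refine Finset.card_bij (fun d _ => d.1.1) ?_ ?_ ?_
    · rintro ⟨⟨p, w⟩, h1, h2⟩ h
      simp only [Finset.mem_filter, Finset.mem_univ, true_and] at h
      subst h
      simp only [Finset.mem_filter, Finset.mem_univ, true_and]
      exact ⟨h1, h2⟩
    · rintro ⟨⟨p, w⟩, h1, h2⟩ h ⟨⟨p', w'⟩, h1', h2'⟩ h' hp
      simp only [Finset.mem_filter, Finset.mem_univ, true_and] at h h'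
      simp only at hp
      subst h; subst h'; subst hp; rfl
    · intro p hp
      simp only [Finset.mem_filter, Finset.mem_univ, true_and] at hp
      exact ⟨⟨(p, v), hp⟩, by simp, rfl⟩
  rw [h1, Finset.card_filter]
  push_cast
  rw [Fintype.sum_prod_type]
  unfold dsum
  rw [Finset.mul_sum]
  apply Finset.sum_congr rfl
  intro e _
  rw [Fintype.sum_bool]
  by_cases hv : v ∈ G.ends e
  · rcases h01 e with h | h | h <;> simp [Act, hv, h] <;> norm_num
  · simp [hv]

lemma exists_packing_of_flow [Fintype V] [Fintype E] (G : Multigraph V E) (hloop : G.LoopFree)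
    (s : V) (f : E → ℝ) (hf : InP G s f)
    (h01 : ∀ e, f e = 0 ∨ f e = 1/2 ∨ f e = 1)
    (hh : ∀ v, v ≠ s → (∀ e, v ∈ G.ends e → f e ≠ 1/2) ∨
      ∃ e₁ e₂, e₁ ≠ e₂ ∧ ∀ e, (v ∈ G.ends e ∧ f e = 1/2) ↔ (e = e₁ ∨ e = e₂)) :
    ∃ y : G.Walk →₀ ℝ, G.IsSCyclePacking s y ∧ (∀ W, y W = 0 ∨ y W = 1/2 ∨ y W = 1) ∧
      packingSize y = dsum G f s / 2 := by
  classical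
  have hex : ∀ v, ∃ b : E × Bool → E × Bool, v ≠ s → ∀ p, v ∈ G.ends p.1 → Act f p →
      v ∈ G.ends (b p).1 ∧ Act f (b p) ∧ b (b p) = p ∧ (b p).1 ≠ p.1 := by
    intro v
    by_cases hv : v = s
    · exact ⟨id, fun h => absurd hv h⟩
    · obtain ⟨b, hb⟩ := exists_invol G s f hf h01 v hv (hh v hv)
      exact ⟨b, fun _ => hb⟩
  choose b hb using hex
  obtain ⟨y, hy1, hy2, hy3⟩ := (mkFlagSys G s f b hb).exists_packing hloop (by
    intro e
    -- the flags of an edge are determined by the copy and the endpoint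
    have hpair : ∃ u w, G.ends e = s(u, w) := by
      induction h : G.ends e using Sym2.ind with
      | _ u w => exact ⟨u, w, rfl⟩
    obtain ⟨u, w, huw⟩ := hpair
    have hle := Finset.card_le_card_of_injOn (s := Finset.univ.filter
      fun d : Flag G f => (mkFlagSys G s f b hb).ed d = e)
      (t := (Finset.univ : Finset Bool) ×ˢ ({u, w} : Finset V))
      (fun d => (d.1.1.2, d.1.2)) (by
        rintro ⟨⟨⟨e', t⟩, v⟩, h1, h2⟩ h
        simp only [Finset.coe_filter, Finset.mem_univ, true_and, Set.mem_ofPred_eq] at h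
        change e' = e at h
        subst h
        simp only [huw, Sym2.mem_iff] at h2
        simp [h2]) (by
        rintro ⟨⟨⟨e', t⟩, v⟩, h1, h2⟩ h ⟨⟨⟨e'', t'⟩, v'⟩, h1', h2'⟩ h' hp
        simp only [Finset.coe_filter, Finset.mem_univ, true_and, Set.mem_ofPred_eq] at h h'
        change e' = e at h
        change e'' = e at h'
        simp only [Prod.mk.injEq] at hp
        obtain ⟨rfl, rfl⟩ := hp
        subst h; subst h'; rfl)
    refine hle.trans ?_
    rw [Finset.card_product]
    have := Finset.card_le_two (a := u) (b := w)
    simp only [Finset.card_univ, Fintype.card_bool]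
    omega) (by
    intro v hv
    have h1 := card_flag G f h01 v
    have h2 := hf.2.1 v hv
    have h3 : ((Finset.univ.filter fun d : Flag G f => d.1.2 = v).card : ℝ) ≤ 4 := by linarith
    exact_mod_cast h3)
  refine ⟨y, hy1, hy2, ?_⟩
  rw [hy3]
  have h1 := card_flag G f h01 s
  change ((Finset.univ.filter fun d : Flag G f => d.1.2 = s).card : ℝ) / 4 = _
  rw [h1]; ring

end Multigraph

namespace Multigraph

variable {V E : Type}

lemma weak_duality [Fintype V] (G : Multigraph V E) (s : V) (x : V → ℝ)
    (hx : G.IsSCycleCover s x) (y : G.Walk →₀ ℝ) (hy : G.IsSCyclePacking s y) :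
    packingSize y ≤ ∑ v, x v := by
  obtain ⟨hx0, hxs, hx1⟩ := hx
  obtain ⟨hy0, hyc, hy1⟩ := hy
  calc packingSize y = ∑ W ∈ y.support, y W := rfl
    _ ≤ ∑ W ∈ y.support, y W * ∑ v, (W.vertCount v : ℝ) * x v := by
        apply Finset.sum_le_sum
        intro W hW
        rw [← Walk.sum_vertCount]
        exact le_mul_of_one_le_right (hy0 W) (hx1 W (hyc W (by simpa using hW)))
    _ = ∑ v, x v * ∑ W ∈ y.support, (W.vertCount v : ℝ) * y W := by
        simp only [Finset.mul_sum]
        rw [Finset.sum_comm]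
        apply Finset.sum_congr rfl; intro v _
        apply Finset.sum_congr rfl; intro W _
        ring
    _ ≤ ∑ v, x v := by
        apply Finset.sum_le_sum
        intro v _
        by_cases hv : v = s
        · rw [hv, hxs]; simp
        · exact mul_le_of_le_one_right (hx0 v) (hy1 v hv)

lemma exists_half_pair [Fintype V] [Fintype E] (G : Multigraph V E) (hloop : G.LoopFree) (s : V) :
    ∃ (x : V → ℝ) (y : G.Walk →₀ ℝ), G.IsSCycleCover s x ∧ HalfIntegral x ∧
      G.IsSCyclePacking s y ∧ (∀ W : G.Walk, y W = 0 ∨ y W = 1/2 ∨ y W = 1) ∧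
      ∑ v, x v ≤ packingSize y := by
  classical
  have := scycle_finite G s
  let _ : Fintype {W : G.Walk // W.IsSCycle s} := Fintype.ofFinite _
  obtain ⟨x₀, y, hx0, hy0, hx1, hy1, hxy⟩ := packing_covering_duality
    (fun (v : {v : V // v ≠ s}) (W : {W : G.Walk // W.IsSCycle s}) => (W.1.vertCount v.1 : ℝ))
    (fun _ _ => Nat.cast_nonneg _) (by
      rintro ⟨W, hW⟩
      obtain ⟨v, hv, h1⟩ := Walk.exists_ne hloop W hW
      exact ⟨⟨v, hv⟩, by exact_mod_cast h1⟩)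
  let x : V → ℝ := fun v => if h : v = s then 0 else x₀ ⟨v, h⟩
  have hxs : x s = 0 := by simp [x]
  have hxv : ∀ v : {v : V // v ≠ s}, x v.1 = x₀ v := by
    rintro ⟨v, hv⟩; simp [x, hv]
  have hsum : ∀ g : V → ℝ, g s = 0 → ∑ v, g v = ∑ v : {v : V // v ≠ s}, g v.1 := by
    intro g hg
    rw [← Finset.sum_subtype (p := fun v => v ≠ s) (Finset.univ.filter fun v => v ≠ s)
      (by simp) g, Finset.sum_filter]
    apply Finset.sum_congr rfl
    intro v _
    by_cases hv : v = s
    · simp [hv, hg]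
    · simp [hv]
  have hxW : ∀ W : {W : G.Walk // W.IsSCycle s},
      ∑ i, x (W.1.verts i) = ∑ v : {v : V // v ≠ s}, x₀ v * (W.1.vertCount v.1 : ℝ) := by
    intro W
    rw [Walk.sum_vertCount, hsum _ (by rw [hxs, mul_zero])]
    apply Finset.sum_congr rfl; intro v _
    rw [hxv]; ring
  have hcov : G.IsSCycleCover s x := by
    refine ⟨?_, hxs, ?_⟩
    · intro v
      by_cases hv : v = s
      · rw [hv, hxs]
      · exact (hxv ⟨v, hv⟩) ▸ hx0 _
    · intro W hW
      have := hxW ⟨W, hW⟩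
      rw [this]; exact hx1 ⟨W, hW⟩
  have hswap : ∀ g : V → ℝ, g s = 0 → ∑ W : {W : G.Walk // W.IsSCycle s},
      y W * ∑ i, g (W.1.verts i) =
      ∑ v : {v : V // v ≠ s}, g v.1 * ∑ W, (W.1.vertCount v.1 : ℝ) * y W := by
    intro g hg
    simp only [Finset.mul_sum _ _ (g _)]
    rw [Finset.sum_comm]
    apply Finset.sum_congr rfl; intro W _
    rw [Walk.sum_vertCount, hsum _ (by rw [hg, mul_zero]), Finset.mul_sum]
    apply Finset.sum_congr rfl; intro v _
    ring
  -- complementary slackness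
  have hle1 : ∑ W, y W ≤ ∑ W : {W : G.Walk // W.IsSCycle s}, y W * ∑ i, x (W.1.verts i) :=
    Finset.sum_le_sum fun W _ => le_mul_of_one_le_right (hy0 W) (hcov.2.2 W.1 W.2)
  have hle2 : ∑ v : {v : V // v ≠ s}, x v.1 * ∑ W, (W.1.vertCount v.1 : ℝ) * y W ≤
      ∑ v : {v : V // v ≠ s}, x v.1 :=
    Finset.sum_le_sum fun v _ => mul_le_of_le_one_right (hcov.1 _) (hy1 v)
  have hxx : ∑ v : {v : V // v ≠ s}, x v.1 = ∑ W, y W := by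
    rw [← hxy]; exact Finset.sum_congr rfl fun v _ => hxv v
  have heq := hswap x hxs
  have hcs1 : ∀ W : {W : G.Walk // W.IsSCycle s}, y W ≠ 0 → ∑ i, x (W.1.verts i) = 1 := by
    intro W hW
    have h := (Finset.sum_eq_sum_iff_of_le (s := Finset.univ)
      (f := fun W : {W : G.Walk // W.IsSCycle s} => y W)
      (g := fun W => y W * ∑ i, x (W.1.verts i))
      (fun W _ => le_mul_of_one_le_right (hy0 W) (hcov.2.2 W.1 W.2))).mp
      (by linarith) W (Finset.mem_univ _)
    exact mul_left_cancel₀ hW (by rw [mul_one]; exact h.symm)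
  have hcs2 : ∀ v : {v : V // v ≠ s}, x v.1 ≠ 0 → ∑ W, (W.1.vertCount v.1 : ℝ) * y W = 1 := by
    intro v hv
    have h := (Finset.sum_eq_sum_iff_of_le (s := Finset.univ)
      (f := fun v : {v : V // v ≠ s} => x v.1 * ∑ W, (W.1.vertCount v.1 : ℝ) * y W)
      (g := fun v => x v.1)
      (fun v _ => mul_le_of_le_one_right (hcov.1 _) (hy1 v))).mp
      (by linarith) v (Finset.mem_univ _)
    exact mul_left_cancel₀ hv (by rw [mul_one]; exact h)
  obtain ⟨x', hhalf, hcov', hpos, htight⟩ := exists_half_cover G s x hcov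
  have hx' : ∑ v, x' v ≤ ∑ W, y W := by
    calc ∑ v, x' v = ∑ v : {v : V // v ≠ s}, x' v.1 := hsum _ hcov'.2.1
      _ = ∑ v : {v : V // v ≠ s}, x' v.1 * ∑ W, (W.1.vertCount v.1 : ℝ) * y W := by
          apply Finset.sum_congr rfl; intro v _
          rcases (hcov'.1 v.1).eq_or_lt with h | h
          · rw [← h, zero_mul]
          · rw [hcs2 v (hpos _ h).ne', mul_one]
      _ = ∑ W : {W : G.Walk // W.IsSCycle s}, y W * ∑ i, x' (W.1.verts i) :=
          (hswap x' hcov'.2.1).symm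
      _ ≤ ∑ W, y W := by
          apply Finset.sum_le_sum; intro W _
          by_cases h : y W = 0
          · rw [h, zero_mul]
          · exact mul_le_of_le_one_right (hy0 W) (htight W.1 W.2 (hcs1 W h))
  obtain ⟨f₀, hf₀, hs₀⟩ := exists_inP G hloop s y hy0 (fun v hv => hy1 ⟨v, hv⟩)
  obtain ⟨f, hf, hge, h01, _, hh⟩ := exists_half_flow G hloop s f₀ hf₀
  obtain ⟨z, hz1, hz2, hz3⟩ := exists_packing_of_flow G hloop s f hf h01 hh
  refine ⟨x', z, hcov', hhalf, hz1, hz2, ?_⟩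
  rw [hz3]; linarith

end Multigraph

/-- half-integral LP duality: the minimum size of an `s`-cycle
cover equals the maximum size of an `s`-cycle packing, and both optima are
attained by half-integral solutions. -/
theorem stmt14_lp_duality {V E : Type} [Fintype V] [Fintype E]
    (G : Multigraph V E) (hloop : G.LoopFree) (s : V) :
    ∃ (x : V → ℝ) (y : G.Walk →₀ ℝ),
      G.IsSCycleCover s x ∧ Multigraph.HalfIntegral x ∧
      G.IsSCyclePacking s y ∧ (∀ W : G.Walk, y W = 0 ∨ y W = 1/2 ∨ y W = 1) ∧
      ∑ v, x v = Multigraph.packingSize y ∧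
      (∀ x' : V → ℝ, G.IsSCycleCover s x' → ∑ v, x v ≤ ∑ v, x' v) ∧
      (∀ y' : G.Walk →₀ ℝ, G.IsSCyclePacking s y' →
        Multigraph.packingSize y' ≤ Multigraph.packingSize y) := by
  obtain ⟨x, y, hx, hxh, hy, hyh, hle⟩ := Multigraph.exists_half_pair G hloop s
  have hge := Multigraph.weak_duality G s x hx y hy
  refine ⟨x, y, hx, hxh, hy, hyh, le_antisymm hle hge, ?_, ?_⟩
  · intro x' hx'
    exact hle.trans (Multigraph.weak_duality G s x' hx' y hy)
  · intro y' hy'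
    exact (Multigraph.weak_duality G s x hx y' hy').trans hle
end

section
/- Let G be a multigraph, let k ≥ 0 be an integer, and let v be a vertex of G such that there are more than k vertices u ≠ v with at least two parallel edges between u and v (i.e., v is incident to more than k double edges). Then every feedback vertex set of G of size at most k contains v. -/
/-- if a vertex `v` is joined by double edges to more than `k`
other vertices, then every feedback vertex set of size at most `k`
contains `v`. -/
theorem stmt15_mem_fvs_of_many_double_edges {V E : Type} [Fintype V] [Fintype E]
    (G : Multigraph V E) (k : ℕ) (v : V)
    (h : k < Nat.card {u : V // u ≠ v ∧ 2 ≤ Nat.card {e : E // G.ends e = s(u, v)}}) :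
    ∀ S : Set V, G.IsFVS S → S.ncard ≤ k → v ∈ S := by
  intro S hS hk
  by_contra hv
  have hsub : {u : V | u ≠ v ∧ 2 ≤ Nat.card {e : E // G.ends e = s(u, v)}} ⊆ S := by
    rintro u ⟨huv, h2⟩
    have : Nontrivial {e : E // G.ends e = s(u, v)} :=
      Finite.one_lt_card_iff_nontrivial.mp h2
    obtain ⟨⟨a, ha⟩, ⟨b, hb⟩, hab⟩ := exists_pair_ne {e : E // G.ends e = s(u, v)}
    have hab' : a ≠ b := fun h => hab (Subtype.ext h)
    let W : G.Walk :=
      { len := 2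
        len_pos := by norm_num
        verts := ![u, v, u]
        edges := ![a, b]
        valid := by
          intro i
          fin_cases i
          · simpa using ha
          · simpa [Sym2.eq_swap] using hb }
    have hW : W.IsCycle := by
      refine ⟨rfl, ?_, ?_⟩
      · intro i j hij
        change Fin 2 at i j
        fin_cases i <;> fin_cases j
        · rfl
        · exact absurd hij hab'
        · exact absurd hij hab'.symm
        · rfl
      · intro i j hij
        change Fin 2 at i j
        fin_cases i <;> fin_cases j
        · rfl
        · exact absurd hij huv
        · exact absurd hij huv.symm
        · rfl
    obtain ⟨i, hi⟩ := hS W hW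
    change Fin 3 at i
    fin_cases i
    · exact hi
    · exact absurd hi hv
    · exact hi
  have hle := Set.ncard_le_ncard hsub (Set.toFinite S)
  have heq : Nat.card {u : V // u ≠ v ∧ 2 ≤ Nat.card {e : E // G.ends e = s(u, v)}} =
      {u : V | u ≠ v ∧ 2 ≤ Nat.card {e : E // G.ends e = s(u, v)}}.ncard := rfl
  omega
end

section
/- Let G be a multigraph and let k ≥ 0 be an integer. Suppose that every vertex of G is joined by double edges to at most k other vertices, and that the number of unordered pairs {u,v} of distinct vertices joined by at least two parallel edges is greater than k². Then G has no feedback vertex set of size at most k, i.e., fvs(G) > k. -/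
/-- if every vertex is joined by double edges to at most `k`
other vertices while more than `k²` unordered pairs of distinct vertices are
joined by double edges, then there is no feedback vertex set of size at
most `k`. -/
theorem stmt16_no_small_fvs_of_many_doubles {V E : Type} [Fintype V] [Fintype E]
    (G : Multigraph V E) (k : ℕ)
    (hdeg : ∀ v : V,
      Nat.card {u : V // u ≠ v ∧ 2 ≤ Nat.card {e : E // G.ends e = s(u, v)}} ≤ k)
    (hmany : k ^ 2 <
      Nat.card {p : Sym2 V // ¬ p.IsDiag ∧ 2 ≤ Nat.card {e : E // G.ends e = p}}) :
    ¬ ∃ S : Set V, G.IsFVS S ∧ S.ncard ≤ k := by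
  classical
  rintro ⟨S, hS, hcard⟩
  -- every double edge meets `S`
  have key : ∀ u v : V, u ≠ v → 2 ≤ Nat.card {e : E // G.ends e = s(u, v)} → u ∈ S ∨ v ∈ S := by
    intro u v huv h2
    rw [Nat.card_eq_fintype_card] at h2
    obtain ⟨⟨a, ha⟩, ⟨b, hb⟩, hab⟩ := Fintype.one_lt_card_iff.mp h2
    have hab' : a ≠ b := fun h => hab (Subtype.ext h)
    obtain ⟨i, hi⟩ := hS
      { len := 2
        len_pos := by norm_num
        verts := ![u, v, u]
        edges := ![a, b]
        valid := by
          intro i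
          fin_cases i
          · simpa using ha
          · simpa [Sym2.eq_swap] using hb } (by
        refine ⟨rfl, ?_, ?_⟩
        · intro i j
          fin_cases i <;> fin_cases j <;> simp [hab', hab'.symm]
        · intro i j
          fin_cases i <;> fin_cases j <;> simp [huv, huv.symm])
    change (![u, v, u] : Fin 3 → V) i ∈ S at hi
    change Fin 3 at i
    fin_cases i
    · exact Or.inl hi
    · exact Or.inr hi
    · exact Or.inl hi
  let T : S → Type := fun v =>
    {u : V // u ≠ v.1 ∧ 2 ≤ Nat.card {e : E // G.ends e = s(u, v.1)}}
  let f : (Σ v : S, T v) →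
      {p : Sym2 V // ¬ p.IsDiag ∧ 2 ≤ Nat.card {e : E // G.ends e = p}} :=
    fun x => ⟨s(x.2.1, x.1.1), by simpa using x.2.2.1, x.2.2.2⟩
  have hf : Function.Surjective f := by
    rintro ⟨p, hp1, hp2⟩
    induction p with
    | _ u v =>
      have huv : u ≠ v := by simpa using hp1
      rcases key u v huv hp2 with h | h
      · exact ⟨⟨⟨u, h⟩, ⟨v, huv.symm, by rw [Sym2.eq_swap]; exact hp2⟩⟩,
          Subtype.ext Sym2.eq_swap⟩
      · exact ⟨⟨⟨v, h⟩, ⟨u, huv, hp2⟩⟩, rfl⟩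
  have hle := Nat.card_le_card_of_surjective f hf
  have hsum : Nat.card (Σ v : S, T v) ≤ S.ncard * k := by
    rw [Nat.card_sigma]
    calc ∑ v : S, Nat.card (T v) ≤ ∑ _v : S, k := Finset.sum_le_sum fun v _ => hdeg v.1
      _ = S.ncard * k := by simp [← Nat.card_coe_set_eq]
  have := Nat.mul_le_mul_right k hcard
  rw [pow_two] at hmany
  omega
end

section
/- Let G=(V,E) be a multigraph without self-loops in which every vertex has degree at least three, let s ∈ V, and let x be a half-integral minimum s-cycle cover of G. If 2·x(V) < d(s), then x⁻¹(1) ≠ ∅, i.e., x takes the value 1 on at least one vertex. -/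
namespace Multigraph

variable {V E : Type}

/-- Constructing an `s`-cycle from functions on `ℕ`. -/
lemma cover_nat {G : Multigraph V E} {s : V} {x : V → ℝ} (hx : G.IsSCycleCover s x)
    (L m : ℕ) (hL : 0 < L) (p : ℕ → V) (q : ℕ → E)
    (hv : ∀ i < L, G.ends (q i) = s(p i, p (i+1)))
    (h0 : p 0 = s) (h1 : p L = s) (hint : ∀ i, 0 < i → i < L → p i ≠ s)
    (hU : ∀ i, i + 1 < L → q i ≠ q (i+1))
    (hm1 : ∀ a b, a < m → b < m → a < L → b < L → q a = q b → a = b)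
    (hm2 : ∀ a b, m ≤ a → m ≤ b → a < L → b < L → q a = q b → a = b) :
    1 ≤ ∑ i ∈ Finset.range (L+1), x (p i) := by
  have := hx.2.2 ⟨L, hL, fun i => p i, fun i => q i, fun i => by simpa using hv i i.2⟩ (by
    refine ⟨by simpa [Walk.start] using h0, by simpa [Walk.finish] using h1, ?_, ?_, ?_⟩
    · intro i hi0 hiL
      refine hint i ?_ ?_
      · exact Nat.pos_of_ne_zero (fun h => hi0 (Fin.ext h))
      · have h2 : (i : ℕ) ≠ L := fun h => hiL (Fin.ext h)
        have h3 : (i : ℕ) < L + 1 := i.2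
        omega
    · intro i j hij
      have h3 : (j : ℕ) < L := j.2
      have := hU i (by omega)
      rw [hij] at this
      exact this
    · intro e
      have : Nat.card Bool = 2 := by simp
      rw [← this]
      refine Nat.card_le_card_of_injective (fun i => decide ((i.1 : ℕ) < m)) ?_
      rintro ⟨a, ha⟩ ⟨b, hb⟩ hab
      have hab' : ((a : ℕ) < m) ↔ ((b : ℕ) < m) := by simpa using hab
      have hq : q a = q b := ha.trans hb.symm
      apply Subtype.ext
      apply Fin.ext
      by_cases h : (a : ℕ) < m
      · exact hm1 a b h (hab'.1 h) a.2 b.2 hq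
      · exact hm2 a b (by omega) (by omega) a.2 b.2 hq)
  rw [Finset.sum_range]
  exact this

/-- A simple path from `s` with first edge `e` all of whose vertices, except
possibly the last one, have `x`-value `0`. -/
def ZPath (G : Multigraph V E) (s : V) (x : V → ℝ) (e : E) (k : ℕ) (p : ℕ → V) (q : ℕ → E) :
    Prop :=
  0 < k ∧ p 0 = s ∧ q 0 = e ∧ (∀ i < k, G.ends (q i) = s(p i, p (i+1))) ∧
  (∀ a b, a ≤ k → b ≤ k → p a = p b → a = b) ∧ ∀ i < k, x (p i) = 0

lemma ZPath.edge_inj {G : Multigraph V E} {s : V} {x : V → ℝ} {e : E} {k : ℕ}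
    {p : ℕ → V} {q : ℕ → E} (h : G.ZPath s x e k p q) {a b : ℕ} (ha : a < k) (hb : b < k)
    (hab : q a = q b) : a = b := by
  obtain ⟨-, -, -, hv, hinj, -⟩ := h
  have h1 := hv a ha
  rw [hab, hv b hb, Sym2.eq_iff] at h1
  rcases h1 with ⟨h1, -⟩ | ⟨h1, h2⟩
  · exact (hinj _ _ (by omega) (by omega) h1).symm
  · have := hinj _ _ (by omega) (by omega) h1
    have := hinj _ _ (by omega) (by omega) h2
    omega

lemma ZPath.extend {G : Multigraph V E} (hloop : G.LoopFree) {s : V} {x : V → ℝ}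
    (hx : G.IsSCycleCover s x) {e : E} {k : ℕ}
    {p : ℕ → V} {q : ℕ → E} (h : G.ZPath s x e k p q) (hk : x (p k) = 0)
    (f : E) (hf : p k ∈ G.ends f) (hne : f ≠ q (k-1)) :
    ∃ p' q', G.ZPath s x e (k+1) p' q' := by
  have hei := @ZPath.edge_inj _ _ _ _ _ _ _ _ _ h
  obtain ⟨hk0, hp0, hq0, hv, hinj, hz⟩ := h
  obtain ⟨w, hw⟩ := hf
  by_cases hex : ∃ i ≤ k, p i = w
  · exfalso
    obtain ⟨i, hik, rfl⟩ := hex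
    have hik' : i < k := by
      rcases Nat.lt_or_ge i k with h | h
      · exact h
      · exfalso
        have : i = k := by omega
        subst this
        apply hloop f
        rw [hw]; simp
    have hfq : ∀ t, t < i → f ≠ q t := by
      intro t ht hh
      have h1 := hv t (by omega)
      rw [← hh, hw, Sym2.eq_iff] at h1
      rcases h1 with ⟨h1, -⟩ | ⟨h1, -⟩
      · have := hinj _ _ (by omega) (by omega) h1; omega
      · have := hinj _ _ (by omega) (by omega) h1; omega
    have := cover_nat hx (k+1+i) k (by omega)
      (fun j => if j ≤ k then p j else p (k+1+i-j))
      (fun j => if j < k then q j else if j = k then f else q (k+i-j))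
      ?_ ?_ ?_ ?_ ?_ ?_ ?_
    · rw [Finset.sum_eq_zero] at this
      · norm_num at this
      · intro j hj
        have hj' := Finset.mem_range.1 hj
        have key : ∀ t ≤ k, x (p t) = 0 := by
          intro t ht
          rcases Nat.lt_or_ge t k with h | h
          · exact hz t h
          · have : t = k := by omega
            rw [this]; exact hk
        try dsimp only
        split_ifs with h
        · exact key j h
        · exact key _ (by omega)
    · intro j hj
      try dsimp only
      rcases lt_trichotomy j k with h | h | h
      · rw [if_pos h, if_pos (by omega), if_pos (by omega)]; exact hv j h
      · subst h
        rw [if_neg (by omega), if_pos rfl, if_pos le_rfl, if_neg (by omega)]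
        rw [hw]; congr 3; omega
      · rw [if_neg (by omega), if_neg (by omega), if_neg (by omega), if_neg (by omega)]
        rw [hv _ (by omega), Sym2.eq_swap]
        have e1 : k + i - j + 1 = k + 1 + i - j := by omega
        have e2 : k + i - j = k + 1 + i - (j + 1) := by omega
        rw [e1, e2]
    · simpa using hp0
    · try dsimp only
      rw [if_neg (by omega), Nat.sub_self]; exact hp0
    · intro j hj0 hjL
      rw [← hp0]
      try dsimp only
      split_ifs with h
      · intro hh; have := hinj _ _ (by omega) (by omega) hh; omega
      · intro hh; have := hinj _ _ (by omega) (by omega) hh; omega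
    · intro j hj
      try dsimp only
      rcases lt_trichotomy j k with h | h | h
      · rw [if_pos h]
        split_ifs with h1 h2
        · intro hh; have := hei (by omega) (by omega) hh; omega
        · have : j = k - 1 := by omega
          rw [this]; exact hne.symm
        · omega
      · rw [if_neg (by omega), if_pos h, if_neg (by omega), if_neg (by omega)]
        exact hfq _ (by omega)
      · rw [if_neg (by omega), if_neg (by omega), if_neg (by omega), if_neg (by omega)]
        intro hh; have := hei (by omega) (by omega) hh; omega
    · intro a b ha hb _ _ hab
      simp only [if_pos ha, if_pos hb] at hab
      exact hei ha hb hab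
    · intro a b ha hb haL hbL hab
      try dsimp only at hab
      rw [if_neg (by omega : ¬ a < k), if_neg (by omega : ¬ b < k)] at hab
      split_ifs at hab with h1 h2 h2
      · omega
      · exact absurd hab (hfq _ (by omega))
      · exact absurd hab.symm (hfq _ (by omega))
      · have := hei (by omega) (by omega) hab; omega
  · push Not at hex
    refine ⟨fun j => if j ≤ k then p j else w, fun j => if j < k then q j else f,
      by omega, by simpa using hp0, by simpa [hk0] using hq0, ?_, ?_, ?_⟩
    · intro j hj
      try dsimp only
      rcases Nat.lt_or_ge j k with h | h
      · rw [if_pos h, if_pos (by omega), if_pos (by omega)]; exact hv j h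
      · have : j = k := by omega
        subst this
        rw [if_neg (by omega), if_pos le_rfl, if_neg (by omega)]; exact hw
    · intro a b ha hb hab
      try dsimp only at hab
      split_ifs at hab with h1 h2 h2
      · exact hinj _ _ h1 h2 hab
      · exact absurd hab (hex _ h1)
      · exact absurd hab.symm (hex _ h2)
      · omega
    · intro j hj
      try dsimp only
      rw [if_pos (by omega)]
      rcases Nat.lt_or_ge j k with h | h
      · exact hz j h
      · have : j = k := by omega
        rw [this]; exact hk

lemma exists_zpath [Fintype V] [Fintype E] {G : Multigraph V E} (hloop : G.LoopFree)
    (hdeg : ∀ v : V, 3 ≤ G.degree v) {s : V} {x : V → ℝ}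
    (hx : G.IsSCycleCover s x) (e : E) (he : s ∈ G.ends e) :
    ∃ k p q, G.ZPath s x e k p q ∧ x (p k) ≠ 0 := by
  by_contra hcon
  push Not at hcon
  have key : ∀ n : ℕ, ∃ p q, G.ZPath s x e (n+1) p q := by
    intro n
    induction n with
    | zero =>
      obtain ⟨u, hu⟩ := he
      have hsu : s ≠ u := by
        rintro rfl
        apply hloop e; rw [hu]; simp
      refine ⟨fun j => if j = 0 then s else u, fun _ => e, by omega, by simp, rfl, ?_, ?_, ?_⟩
      · intro i hi
        have : i = 0 := by omega
        subst this
        simpa using hu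
      · intro a b ha hb hab
        try dsimp only at hab
        split_ifs at hab with h1 h2 h2
        · omega
        · exact absurd hab hsu
        · exact absurd hab.symm hsu
        · omega
      · intro i hi
        have : i = 0 := by omega
        subst this
        simpa using hx.2.1
    | succ n ih =>
      obtain ⟨p, q, hpq⟩ := ih
      have h0 := hcon _ p q hpq
      obtain ⟨f, hf, hne⟩ : ∃ f, p (n+1) ∈ G.ends f ∧ f ≠ q (n+1-1) := by
        by_contra hc
        push Not at hc
        have h3 := hdeg (p (n+1))
        have : Nat.card {e : E // p (n+1) ∈ G.ends e} ≤ 1 := by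
          rw [Finite.card_le_one_iff_subsingleton]
          exact ⟨fun a b => Subtype.ext ((hc _ a.2).trans (hc _ b.2).symm)⟩
        unfold degree at h3
        omega
      exact hpq.extend hloop hx h0 f hf hne
  obtain ⟨p, q, hpq⟩ := key (Fintype.card V)
  obtain ⟨-, -, -, -, hinj, -⟩ := hpq
  have := Fintype.card_le_of_injective (fun i : Fin (Fintype.card V + 1) => p i) (by
    intro a b hab
    exact Fin.ext (hinj _ _ (by omega) (by omega) hab))
  simp at this

lemma zpath_inj {G : Multigraph V E} {s : V} {x : V → ℝ}
    (hx : G.IsSCycleCover s x) (hlt : ∀ v, x v < 1) {e e' : E} {k k' : ℕ}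
    {p p' : ℕ → V} {q q' : ℕ → E} (h : G.ZPath s x e k p q) (h' : G.ZPath s x e' k' p' q')
    (heq : p k = p' k') : e = e' := by
  classical
  by_contra hee
  have hei := @ZPath.edge_inj _ _ _ _ _ _ _ _ _ h
  have hei' := @ZPath.edge_inj _ _ _ _ _ _ _ _ _ h'
  obtain ⟨hk0, hp0, hq0, hv, hinj, hz⟩ := h
  obtain ⟨hk0', hp0', hq0', hv', hinj', hz'⟩ := h'
  have hex : ∃ i, 0 < i ∧ i ≤ k ∧ ∃ j ≤ k', p i = p' j := ⟨k, hk0, le_rfl, k', le_rfl, heq⟩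
  obtain ⟨i, ⟨hi0, hik, j, hjk, hij⟩, hmin⟩ :
      ∃ i, (0 < i ∧ i ≤ k ∧ ∃ j ≤ k', p i = p' j) ∧
        ∀ t < i, ¬ (0 < t ∧ t ≤ k ∧ ∃ j ≤ k', p t = p' j) :=
    ⟨Nat.find hex, Nat.find_spec hex, fun t ht => Nat.find_min hex ht⟩
  have hj0 : 0 < j := by
    rcases Nat.eq_zero_or_pos j with h | h
    · exfalso
      subst h
      rw [hp0', ← hp0] at hij
      have := hinj _ _ hik (by omega) hij
      omega
    · exact h
  have := cover_nat hx (i+j) i (by omega)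
    (fun t => if t ≤ i then p t else p' (i+j-t))
    (fun t => if t < i then q t else q' (i+j-1-t))
    ?_ ?_ ?_ ?_ ?_ ?_ ?_
  · rw [Finset.sum_eq_single i] at this
    · simp only [le_refl, if_true] at this
      exact absurd (hlt (p i)) (not_lt.2 this)
    · intro t ht hti
      have := Finset.mem_range.1 ht
      try dsimp only
      split_ifs with h
      · exact hz t (by omega)
      · exact hz' _ (by omega)
    · intro hh
      exact absurd (Finset.mem_range.2 (by omega)) hh
  · intro t ht
    try dsimp only
    rcases Nat.lt_or_ge t i with h | h
    · rw [if_pos h, if_pos (by omega), if_pos (by omega)]; exact hv t (by omega)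
    · rw [if_neg (by omega : ¬ t < i), if_neg (by omega : ¬ t + 1 ≤ i), hv' _ (by omega),
        Sym2.eq_swap]
      have e1 : i + j - 1 - t = i + j - (t+1) := by omega
      rw [e1]
      rcases Nat.eq_or_lt_of_le h with h2 | h2
      · subst h2
        rw [if_pos le_rfl, hij]
        have e2 : i + j - (i+1) + 1 = j := by omega
        rw [e2]
      · rw [if_neg (by omega)]
        have e2 : i + j - (t+1) + 1 = i + j - t := by omega
        rw [e2]
  · simpa using hp0
  · try dsimp only
    rw [if_neg (by omega), Nat.sub_self]; exact hp0'
  · intro t ht0 htL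
    try dsimp only
    split_ifs with h
    · rw [← hp0]
      intro hh; have := hinj _ _ (by omega) (by omega) hh; omega
    · rw [← hp0']
      intro hh; have := hinj' _ _ (by omega) (by omega) hh; omega
  · intro t ht
    try dsimp only
    rcases lt_trichotomy (t+1) i with h | h | h
    · rw [if_pos (by omega), if_pos (by omega)]
      intro hh; have := hei (by omega) (by omega) hh; omega
    · rw [if_pos (by omega), if_neg (by omega)]
      have e1 : i + j - 1 - (t+1) = j - 1 := by omega
      rw [e1]
      intro hh
      have h1 := hv t (by omega)
      have h2 := hv' (j-1) (by omega)
      have e2 : j - 1 + 1 = j := by omega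
      rw [e2, ← hh, h1, h, ← hij] at h2
      have h3 : p t = p' (j-1) := Sym2.congr_left.1 h2
      rcases Nat.eq_zero_or_pos t with ht0 | ht0
      · subst ht0
        rw [hp0, ← hp0'] at h3
        have := hinj' _ _ (by omega) (by omega) h3
        rw [← this, hq0, hq0'] at hh
        exact hee hh
      · exact hmin t (by omega) ⟨ht0, by omega, j-1, by omega, h3⟩
    · rw [if_neg (by omega), if_neg (by omega)]
      intro hh; have := hei' (by omega) (by omega) hh; omega
  · intro a b ha hb _ _ hab
    simp only [if_pos ha, if_pos hb] at hab
    exact hei (by omega) (by omega) hab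
  · intro a b ha hb haL hbL hab
    try dsimp only at hab
    rw [if_neg (by omega), if_neg (by omega)] at hab
    have := hei' (by omega) (by omega) hab; omega

end Multigraph

/-- in a loop-free multigraph of minimum degree at least `3`,
if a half-integral minimum `s`-cycle cover `x` satisfies `2·x(V) < d(s)`,
then `x` takes the value `1` somewhere. -/
theorem stmt17_exists_one_of_large_degree {V E : Type} [Fintype V] [Fintype E]
    (G : Multigraph V E) (hloop : G.LoopFree) (hdeg : ∀ v : V, 3 ≤ G.degree v)
    (s : V) (x : V → ℝ)
    (hx : G.IsMinSCycleCover s x) (hhalf : Multigraph.HalfIntegral x)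
    (h : 2 * ∑ v, x v < (G.degree s : ℝ)) :
    ∃ v : V, x v = 1 := by
  classical
  by_contra hcon
  push Not at hcon
  have hc := hx.1
  have hlt : ∀ v, x v < 1 := by
    intro v
    rcases hhalf v with h | h | h
    · rw [h]; norm_num
    · rw [h]; norm_num
    · exact absurd h (hcon v)
  have hex : ∀ e : {e : E // s ∈ G.ends e}, ∃ v : {v : V // x v ≠ 0},
      ∃ k p q, G.ZPath s x e.1 k p q ∧ p k = v.1 := by
    rintro ⟨e, he⟩
    obtain ⟨k, p, q, hp, hk⟩ := Multigraph.exists_zpath hloop hdeg hc e he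
    exact ⟨⟨p k, hk⟩, k, p, q, hp, rfl⟩
  choose φ hφ using hex
  have hinj : Function.Injective φ := by
    intro a b hab
    obtain ⟨k, p, q, hp, hk⟩ := hφ a
    obtain ⟨k', p', q', hp', hk'⟩ := hφ b
    exact Subtype.ext (Multigraph.zpath_inj hc hlt hp hp' (by rw [hk, hk', hab]))
  have hcard : G.degree s ≤ Nat.card {v : V // x v ≠ 0} :=
    Nat.card_le_card_of_injective φ hinj
  have hsum : 2 * ∑ v, x v = (Nat.card {v : V // x v ≠ 0} : ℝ) := by
    rw [Nat.card_eq_fintype_card, Fintype.card_subtype, Finset.card_filter, Finset.mul_sum]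
    push_cast
    refine Finset.sum_congr rfl fun v _ => ?_
    rcases hhalf v with h | h | h
    · simp [h]
    · rw [h]; norm_num
    · exact absurd h (hcon v)
  rw [hsum] at h
  have : Nat.card {v : V // x v ≠ 0} < G.degree s := by exact_mod_cast h
  omega
end
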